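/- arXiv:1805.02604 — 4 statements merged into one kernel-verified Lean document; each statement's English description precedes it below -/
import Mathlib

section
/- Let N ≥ 1 and let η, ζ : ℝ^N → ℝ^N be of class C³ with all partial derivatives up to order 3 bounded, and with η, ζ themselves bounded. Define Φ_t(x) := x + t·η(x) + (t²/2)·ζ(x). Then there exists τ > 0 such that for every t with |t| < τ the map Φ_t : ℝ^N → ℝ^N is a bijection, and for every y ∈ ℝ^N the curve t ↦ Φ_t⁻¹(y) is twice differentiable at t = 0 with Φ_0⁻¹(y) = y, first derivative −η(y), and second derivative 2((η·∇)η)(y) − ζ(y) at t = 0. -/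
open Filter MeasureTheory Topology
open scoped RealInnerProductSpace

namespace PaperAC

/-- The partial derivative `∂f/∂x_j` of a scalar function on `ℝ^N`. -/
noncomputable def pdv {N : ℕ} (f : (Fin N → ℝ) → ℝ) (j : Fin N) (x : Fin N → ℝ) : ℝ :=
  fderiv ℝ f x (Pi.single j 1)

/-- The advection field `(η·∇)η`, with components `((η·∇)η)^i = ∑_j η^j ∂η^i/∂x_j`. -/
noncomputable def advf {N : ℕ} (η : (Fin N → ℝ) → (Fin N → ℝ)) (x : Fin N → ℝ) :
    Fin N → ℝ :=
  fun i => ∑ j, η x j * pdv (fun z => η z i) j x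

/-- The gradient `∇u` of a scalar function on `ℝ^N`. -/
noncomputable def grad {N : ℕ} (u : (Fin N → ℝ) → ℝ) (x : Fin N → ℝ) : Fin N → ℝ :=
  fun i => pdv u i x

/-- `X₀ := (D²u·η, η) + (∇u, 2(η·∇)η − ζ)`. -/
noncomputable def X0 {N : ℕ} (u : (Fin N → ℝ) → ℝ) (η ζ : (Fin N → ℝ) → (Fin N → ℝ))
    (y : Fin N → ℝ) : ℝ :=
  (∑ i, ∑ j, pdv (pdv u i) j y * η y i * η y j)
    + ∑ i, pdv u i y * (2 * advf η y i - ζ y i)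

/-- `−∇u·η`. -/
noncomputable def nGradDot {N : ℕ} (u : (Fin N → ℝ) → ℝ) (η : (Fin N → ℝ) → (Fin N → ℝ))
    (x : Fin N → ℝ) : ℝ :=
  -(∑ i, pdv u i x * η x i)

/-- `F_z`, the partial derivative of `F = F(z,p)` in the scalar variable. -/
noncomputable def Fz {N : ℕ} (F : ℝ × (Fin N → ℝ) → ℝ) (z : ℝ) (p : Fin N → ℝ) : ℝ :=
  fderiv ℝ F (z, p) (1, 0)

/-- `F_{p_i}`. -/
noncomputable def Fp {N : ℕ} (F : ℝ × (Fin N → ℝ) → ℝ) (i : Fin N) (z : ℝ) (p : Fin N → ℝ) :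
    ℝ :=
  fderiv ℝ F (z, p) (0, Pi.single i 1)

/-- `F_{zz}`. -/
noncomputable def Fzz {N : ℕ} (F : ℝ × (Fin N → ℝ) → ℝ) (z : ℝ) (p : Fin N → ℝ) : ℝ :=
  fderiv ℝ (fun q => fderiv ℝ F q (1, 0)) (z, p) (1, 0)

/-- `F_{z p_i}`. -/
noncomputable def Fzp {N : ℕ} (F : ℝ × (Fin N → ℝ) → ℝ) (i : Fin N) (z : ℝ) (p : Fin N → ℝ) :
    ℝ :=
  fderiv ℝ (fun q => fderiv ℝ F q ((0 : ℝ), Pi.single i 1)) (z, p) (1, 0)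

/-- `F_{p_i p_j}`. -/
noncomputable def Fpp {N : ℕ} (F : ℝ × (Fin N → ℝ) → ℝ) (i j : Fin N) (z : ℝ)
    (p : Fin N → ℝ) : ℝ :=
  fderiv ℝ (fun q => fderiv ℝ F q ((0 : ℝ), Pi.single j 1)) (z, p) ((0 : ℝ), Pi.single i 1)

/-- `𝔄₁(t) = A(u ∘ Φ_t⁻¹) = ∫_Ω F(u_t, ∇u_t)`, the inner deformation of the functional
`A(w) := ∫_Ω F(w, ∇w)`. -/
noncomputable def innerA {N : ℕ} (Ω : Set (Fin N → ℝ)) (F : ℝ × (Fin N → ℝ) → ℝ)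
    (u : (Fin N → ℝ) → ℝ) (Φ : ℝ → (Fin N → ℝ) → (Fin N → ℝ)) (t : ℝ) : ℝ :=
  ∫ y in Ω, F (u (Function.invFun (Φ t) y),
      grad (fun z => u (Function.invFun (Φ t) z)) y)

/-- `t ↦ A(u + tφ) = ∫_Ω F(u + tφ, ∇u + t∇φ)`, the outer deformation of the functional
`A(w) := ∫_Ω F(w, ∇w)`. -/
noncomputable def gateauxA {N : ℕ} (Ω : Set (Fin N → ℝ)) (F : ℝ × (Fin N → ℝ) → ℝ)
    (u φ : (Fin N → ℝ) → ℝ) (t : ℝ) : ℝ :=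
  ∫ x in Ω, F (u x + t * φ x, fun i => pdv u i x + t * pdv φ i x)

/-- The matrix `M_t(x)` with entries `δ_{ij} + t ∂η^i/∂x_j + (t²/2) ∂W^i/∂x_j`. -/
noncomputable def defMat {N : ℕ} (η W : (Fin N → ℝ) → (Fin N → ℝ)) (t : ℝ)
    (x : Fin N → ℝ) : Matrix (Fin N) (Fin N) ℝ :=
  Matrix.of fun i j =>
    (if i = j then (1 : ℝ) else 0) + t * pdv (fun z => η z i) j x
      + (t ^ 2 / 2) * pdv (fun z => W z i) j x

/-- `Φ(a) := ∫_0^a |s² − 1| ds`. -/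
noncomputable def PhiAC (a : ℝ) : ℝ := ∫ s in (0 : ℝ)..a, |s ^ 2 - 1|

/-- All partial derivatives (= iterated Fréchet derivatives) of `f` up to order `n` are
bounded; the case `i = 0` says `f` itself is bounded. -/
def BddUpTo {N : ℕ} {E : Type*} [NormedAddCommGroup E] [NormedSpace ℝ E]
    (n : ℕ) (f : (Fin N → ℝ) → E) : Prop :=
  ∀ i : ℕ, i ≤ n → ∃ C : ℝ, ∀ x, ‖iteratedFDeriv ℝ i f x‖ ≤ C


section Helpers

variable {E : Type*} [NormedAddCommGroup E] [NormedSpace ℝ E]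

theorem aux_bij [CompleteSpace E] (g : E → E) (c : NNReal) (hc : c < 1)
    (hg : LipschitzWith c g) : Function.Bijective (fun x => x + g x) := by
  constructor
  · intro x x' h
    have h1 : x - x' = g x' - g x := by
      have h : x + g x = x' + g x' := h
      rw [sub_eq_sub_iff_add_eq_add, h, add_comm]
    have h2 := hg.dist_le_mul x' x
    rw [dist_eq_norm, dist_eq_norm, ← h1, norm_sub_rev x' x] at h2
    have hc' : (c : ℝ) < 1 := by exact_mod_cast hc
    have h3 : ‖x - x'‖ = 0 := by
      nlinarith [norm_nonneg (x - x')]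
    exact sub_eq_zero.mp (norm_eq_zero.mp h3)
  · intro y
    have hk : ContractingWith c (fun x => y - g x) := by
      refine ⟨hc, LipschitzWith.of_dist_le_mul fun x x' => ?_⟩
      rw [dist_sub_left]
      exact hg.dist_le_mul x x'
    have : Nonempty E := ⟨0⟩
    have := hk.fixedPoint_isFixedPt
    refine ⟨ContractingWith.fixedPoint _ hk, ?_⟩
    · have h : y - g (ContractingWith.fixedPoint _ hk) = ContractingWith.fixedPoint _ hk := this
      show ContractingWith.fixedPoint _ hk + g (ContractingWith.fixedPoint _ hk) = y
      rw [← sub_eq_iff_eq_add.mp h]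

theorem aux_fderiv (η ζ : E → E) (hη : ContDiff ℝ 3 η) (hζ : ContDiff ℝ 3 ζ) (t : ℝ) (x : E) :
    HasFDerivAt (fun x => t • η x + (t ^ 2 / 2) • ζ x)
      (t • fderiv ℝ η x + (t ^ 2 / 2) • fderiv ℝ ζ x) x :=
  (((hη.differentiable (by norm_num)) x).hasFDerivAt.const_smul t).add
    (((hζ.differentiable (by norm_num)) x).hasFDerivAt.const_smul (t ^ 2 / 2))

theorem aux_bound (η ζ : E → E) (K L : ℝ)
    (hK : ∀ x, ‖fderiv ℝ η x‖ ≤ K) (hL : ∀ x, ‖fderiv ℝ ζ x‖ ≤ L)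
    (t : ℝ) (ht : |t| < 1 / (1 + K + L)) :
    (∀ x, ‖t • fderiv ℝ η x + (t ^ 2 / 2) • fderiv ℝ ζ x‖ ≤ |t| * (K + L)) ∧
      |t| * (K + L) < 1 ∧ 0 ≤ |t| * (K + L) := by
  have hK0 : 0 ≤ K := (norm_nonneg _).trans (hK 0)
  have hL0 : 0 ≤ L := (norm_nonneg _).trans (hL 0)
  have ht0 := abs_nonneg t
  rw [lt_div_iff₀ (by positivity)] at ht
  have ht1 : |t| < 1 := by nlinarith [mul_nonneg ht0 hK0, mul_nonneg ht0 hL0]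
  refine ⟨fun x => ?_, by nlinarith, by positivity⟩
  refine (norm_add_le _ _).trans ?_
  rw [norm_smul, norm_smul, Real.norm_eq_abs, Real.norm_eq_abs,
    abs_of_nonneg (by positivity : 0 ≤ t ^ 2 / 2), ← sq_abs t]
  have h1 := mul_le_mul_of_nonneg_left (hK x) ht0
  have h2 := mul_le_mul_of_nonneg_left (hL x) (by positivity : 0 ≤ |t| ^ 2 / 2)
  have h3 : |t| ^ 2 / 2 * L ≤ |t| * L := by
    apply mul_le_mul_of_nonneg_right _ hL0
    nlinarith
  linarith

theorem aux_smooth [FiniteDimensional ℝ E] (η ζ : E → E) (hη : ContDiff ℝ 3 η)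
    (hζ : ContDiff ℝ 3 ζ) (K L : ℝ)
    (hK : ∀ x, ‖fderiv ℝ η x‖ ≤ K) (hL : ∀ x, ‖fderiv ℝ ζ x‖ ≤ L)
    (X : ℝ → E) (y : E) (τ : ℝ) (hτ : τ = 1 / (1 + K + L))
    (hX : ∀ t, |t| < τ → ∀ x, x + t • η x + (t ^ 2 / 2) • ζ x = y ↔ x = X t)
    (t : ℝ) (ht : |t| < τ) : ContDiffAt ℝ 3 X t := by
  have : CompleteSpace E := FiniteDimensional.complete ℝ E
  obtain ⟨hb, hc, hc0⟩ := aux_bound η ζ K L hK hL t (hτ ▸ ht)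
  set G : ℝ × E → ℝ × E := fun p => (p.1, p.2 + p.1 • η p.2 + (p.1 ^ 2 / 2) • ζ p.2) with hG
  have hGc : ContDiff ℝ 3 G := by
    rw [hG]; fun_prop
  set p : ℝ × E := (t, X t)
  have hGp : G p = (t, y) := by
    simp only [hG, p]; rw [(hX t ht (X t)).2 rfl]
  have hGd : HasFDerivAt G (fderiv ℝ G p) p := (hGc.differentiable (by norm_num) p).hasFDerivAt
  have hinj : Function.Injective (fderiv ℝ G p : ℝ × E →ₗ[ℝ] ℝ × E) := by
    rw [injective_iff_map_eq_zero]
    rintro ⟨s, v⟩ hsv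
    have hsv : fderiv ℝ G p (s, v) = 0 := hsv
    have e1 : (ContinuousLinearMap.fst ℝ ℝ E).comp (fderiv ℝ G p)
        = ContinuousLinearMap.fst ℝ ℝ E :=
      hGd.fst.unique (hasFDerivAt_fst)
    have hs : s = 0 := by
      have := DFunLike.congr_fun e1 (s, v)
      simp [hsv] at this
      exact this.symm
    subst hs
    have e2 : HasFDerivAt (fun x => (G (t, x)).2)
        (((ContinuousLinearMap.snd ℝ ℝ E).comp (fderiv ℝ G p)).comp
          (ContinuousLinearMap.inr ℝ ℝ E)) (X t) :=
      HasFDerivAt.comp (X t) (g := fun q => (G q).2) (f := fun x => (t, x)) hGd.snd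
        (hasFDerivAt_prodMk_right t (X t))
    have e3 : HasFDerivAt (fun x => (G (t, x)).2) (ContinuousLinearMap.id ℝ E +
        (t • fderiv ℝ η (X t) + (t ^ 2 / 2) • fderiv ℝ ζ (X t))) (X t) := by
      have := (hasFDerivAt_id (𝕜 := ℝ) (X t)).add (aux_fderiv η ζ hη hζ t (X t))
      refine this.congr_of_eventuallyEq (Filter.Eventually.of_forall fun x => ?_)
      simp [hG, add_assoc]
    have e4 := DFunLike.congr_fun (e2.unique e3) v
    simp only [ContinuousLinearMap.comp_apply, ContinuousLinearMap.inr_apply, hsv,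
      ContinuousLinearMap.add_apply (ContinuousLinearMap.id ℝ E)] at e4
    have e5 : v = - ((t • fderiv ℝ η (X t) + (t ^ 2 / 2) • fderiv ℝ ζ (X t)) v) := by
      apply eq_neg_of_add_eq_zero_left
      simpa using e4.symm
    have e6 : ‖v‖ ≤ |t| * (K + L) * ‖v‖ := by
      calc ‖v‖ = ‖(t • fderiv ℝ η (X t) + (t ^ 2 / 2) • fderiv ℝ ζ (X t)) v‖ := by
            conv_lhs => rw [e5]
            rw [norm_neg]
        _ ≤ _ := ContinuousLinearMap.le_of_opNorm_le _ (hb _) v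
    have hv : ‖v‖ = 0 := by nlinarith [norm_nonneg v]
    rw [norm_eq_zero.mp hv]; rfl
  let A : (ℝ × E) ≃L[ℝ] (ℝ × E) :=
    (LinearEquiv.ofInjectiveEndo _ hinj).toContinuousLinearEquiv
  have hA : (A : ℝ × E →L[ℝ] ℝ × E) = fderiv ℝ G p := by
    exact ContinuousLinearMap.ext fun q => rfl
  have hGd' : HasFDerivAt G (A : ℝ × E →L[ℝ] ℝ × E) p := hA ▸ hGd
  have hloc := hGc.contDiffAt.to_localInverse hGd' (by norm_num)
  have hri := (hGc.contDiffAt.hasStrictFDerivAt' hGd' (by norm_num : (3 : WithTop ℕ∞) ≠ 0)).eventually_right_inverse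
  set H := (hGc.contDiffAt (x := p)).localInverse hGd' (by norm_num)
  have hri : ∀ᶠ q in 𝓝 (G p), G (H q) = q := hri
  rw [hGp] at hloc hri
  have hcomp : ContDiffAt ℝ 3 (fun s : ℝ => (H (s, y)).2) t := by
    have : ContDiffAt ℝ 3 (fun s : ℝ => H (s, y)) t :=
      ContDiffAt.comp t (g := H) (f := fun s : ℝ => (s, y)) hloc (by fun_prop)
    exact this.snd
  refine hcomp.congr_of_eventuallyEq ?_
  have hcont : Filter.Tendsto (fun s : ℝ => (s, y)) (𝓝 t) (𝓝 (t, y)) :=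
    (Continuous.prodMk_left y).continuousAt
  filter_upwards [hcont.eventually hri, (continuous_abs.tendsto t).eventually (gt_mem_nhds ht)] with s hs hs'
  have h1 : (H (s, y)).1 = s := congrArg Prod.fst hs
  have h2 := congrArg Prod.snd hs
  simp only [hG, h1] at h2
  exact ((hX s hs' _).1 h2).symm

theorem aux_derivs (η ζ : E → E) (hη : ContDiff ℝ 3 η)
    (hζ : ContDiff ℝ 3 ζ) (X : ℝ → E) (y : E)
    (hX : ContDiffAt ℝ 3 X 0)
    (heq : ∀ᶠ t in 𝓝 (0 : ℝ), X t + t • η (X t) + (t ^ 2 / 2) • ζ (X t) = y) :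
    deriv X 0 = - η y ∧ HasDerivAt (deriv X) ((2 : ℝ) • fderiv ℝ η y (η y) - ζ y) 0 := by
  have hX0 : X 0 = y := by simpa using heq.self_of_nhds
  have hd : ∀ᶠ t in 𝓝 (0 : ℝ), DifferentiableAt ℝ X t := by
    filter_upwards [(hX.of_le (by norm_num : (1 : WithTop ℕ∞) ≤ 3)).eventually (by simp)] with t ht
    exact ht.differentiableAt (by norm_num)
  have hηd : Differentiable ℝ η := hη.differentiable (by norm_num)
  have hζd : Differentiable ℝ ζ := hζ.differentiable (by norm_num)
  -- first differentiation
  have h1 : ∀ᶠ t in 𝓝 (0 : ℝ), deriv X t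
      = -(η (X t) + t • (fderiv ℝ η (X t) (deriv X t)) + t • ζ (X t)
        + (t ^ 2 / 2) • fderiv ℝ ζ (X t) (deriv X t)) := by
    filter_upwards [hd, heq.eventually_nhds] with t ht ht'
    have a1 : HasDerivAt (fun t => η (X t)) (fderiv ℝ η (X t) (deriv X t)) t :=
      (hηd (X t)).hasFDerivAt.comp_hasDerivAt t ht.hasDerivAt
    have a2 : HasDerivAt (fun t => ζ (X t)) (fderiv ℝ ζ (X t) (deriv X t)) t :=
      (hζd (X t)).hasFDerivAt.comp_hasDerivAt t ht.hasDerivAt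
    have a3 : HasDerivAt (fun t : ℝ => t ^ 2 / 2) t t := by
      have := ((hasDerivAt_id t).pow 2).div_const 2
      simpa using this
    have a4 := (ht.hasDerivAt.add ((hasDerivAt_id t).smul a1)).add (a3.smul a2)
    have a5 : HasDerivAt (fun _ : ℝ => y) _ t := a4.congr_of_eventuallyEq (ht'.mono fun s hs => hs.symm)
    have a6 := a5.unique (hasDerivAt_const t y)
    simp only [id, one_smul] at a6
    rw [eq_neg_iff_add_eq_zero, ← a6]
    abel
  have h0 : deriv X 0 = - η y := by
    simpa [hX0] using h1.self_of_nhds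
  refine ⟨h0, ?_⟩
  have hX2 : ContDiffAt ℝ 2 (deriv X) 0 := by
    have := (hX.fderiv_right (m := 2) (by norm_num)).clm_apply (contDiffAt_const (c := (1 : ℝ)))
    simpa using this
  have hXd : DifferentiableAt ℝ X 0 := hd.self_of_nhds
  have hX'd : DifferentiableAt ℝ (deriv X) 0 := hX2.differentiableAt (by norm_num)
  have b1 : HasDerivAt (fun t => η (X t)) (fderiv ℝ η y (- η y)) 0 := by
    have := (hηd (X 0)).hasFDerivAt.comp_hasDerivAt 0 hXd.hasDerivAt
    rwa [hX0, h0] at this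
  have b2 : HasDerivAt (fun t => ζ (X t)) (fderiv ℝ ζ (X 0) (deriv X 0)) 0 :=
    (hζd (X 0)).hasFDerivAt.comp_hasDerivAt 0 hXd.hasDerivAt
  have c1 : DifferentiableAt ℝ (fun t => fderiv ℝ η (X t) (deriv X t)) 0 := by
    have : Differentiable ℝ (fderiv ℝ η) :=
      (hη.fderiv_right (m := 2) (by norm_num)).differentiable (by norm_num)
    exact ((this (X 0)).comp 0 hXd).clm_apply hX'd
  have c2 : DifferentiableAt ℝ (fun t => fderiv ℝ ζ (X t) (deriv X t)) 0 := by
    have : Differentiable ℝ (fderiv ℝ ζ) :=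
      (hζ.fderiv_right (m := 2) (by norm_num)).differentiable (by norm_num)
    exact ((this (X 0)).comp 0 hXd).clm_apply hX'd
  have a3 : HasDerivAt (fun t : ℝ => t ^ 2 / 2) 0 0 := by
    have := ((hasDerivAt_id (0 : ℝ)).pow 2).div_const 2
    simpa using this
  have d := (((b1.add ((hasDerivAt_id (0 : ℝ)).smul c1.hasDerivAt)).add
    ((hasDerivAt_id (0 : ℝ)).smul b2)).add (a3.smul c2.hasDerivAt)).neg
  have d' := d.congr_of_eventuallyEq (f₁ := deriv X) h1
  convert d' using 1
  simp [hX0, h0, two_smul]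
  try abel

end Helpers

/-- For bounded `C³` vector fields `η, ζ` with bounded derivatives up to
order 3, the deformation `Φ_t(x) := x + t η(x) + (t²/2) ζ(x)` is a bijection of `ℝ^N` for
all small `|t|`, and for every `y` the curve `t ↦ Φ_t⁻¹(y)` is twice differentiable at
`t = 0` with `Φ_0⁻¹(y) = y`, first derivative `−η(y)` and second derivative
`2((η·∇)η)(y) − ζ(y)` at `t = 0`. -/
theorem inverse_of_second_order_deformation
    (N : ℕ) (hN : 1 ≤ N)
    (η ζ : (Fin N → ℝ) → (Fin N → ℝ))
    (hη : ContDiff ℝ 3 η) (hηb : BddUpTo 3 η)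
    (hζ : ContDiff ℝ 3 ζ) (hζb : BddUpTo 3 ζ)
    (Φ : ℝ → (Fin N → ℝ) → (Fin N → ℝ))
    (hΦ : ∀ t x, Φ t x = x + t • η x + (t ^ 2 / 2) • ζ x) :
    ∃ τ > (0 : ℝ), (∀ t : ℝ, |t| < τ → Function.Bijective (Φ t)) ∧
      ∀ y : Fin N → ℝ, ∃ c' : ℝ → (Fin N → ℝ),
        Function.invFun (Φ 0) y = y ∧
        (∀ t : ℝ, |t| < τ →
          HasDerivAt (fun s : ℝ => Function.invFun (Φ s) y) (c' t) t) ∧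
        c' 0 = -η y ∧
        HasDerivAt c' (fun i => 2 * advf η y i - ζ y i) 0 := by
  obtain ⟨K, hK⟩ := hηb 1 (by norm_num)
  obtain ⟨L, hL⟩ := hζb 1 (by norm_num)
  simp only [norm_iteratedFDeriv_one] at hK hL
  have hK0 : 0 ≤ K := (norm_nonneg _).trans (hK 0)
  have hL0 : 0 ≤ L := (norm_nonneg _).trans (hL 0)
  have hbij : ∀ t : ℝ, |t| < 1 / (1 + K + L) → Function.Bijective (Φ t) := by
    intro t ht
    obtain ⟨hb, hc, hc0⟩ := aux_bound η ζ K L hK hL t ht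
    have hl : LipschitzWith ⟨|t| * (K + L), hc0⟩ (fun x => t • η x + (t ^ 2 / 2) • ζ x) := by
      apply lipschitzWith_of_nnnorm_fderiv_le (𝕜 := ℝ)
        (fun x => (aux_fderiv η ζ hη hζ t x).differentiableAt)
      intro x
      rw [(aux_fderiv η ζ hη hζ t x).fderiv]
      exact hb x
    have := aux_bij _ _ (show (⟨|t| * (K + L), hc0⟩ : NNReal) < 1 from hc) hl
    have e : Φ t = fun x => x + (t • η x + (t ^ 2 / 2) • ζ x) := by
      funext x; rw [hΦ, add_assoc]
    rw [e]; exact this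
  have hτ : 0 < 1 / (1 + K + L) := by positivity
  refine ⟨1 / (1 + K + L), hτ, hbij, fun y => ?_⟩
  set X : ℝ → (Fin N → ℝ) := fun s => Function.invFun (Φ s) y with hXdef
  have hX : ∀ t, |t| < 1 / (1 + K + L) → ∀ x,
      x + t • η x + (t ^ 2 / 2) • ζ x = y ↔ x = X t := by
    intro t ht x
    rw [← hΦ]
    constructor
    · rintro rfl
      exact (Function.leftInverse_invFun (hbij t ht).1 x).symm
    · rintro rfl
      exact Function.rightInverse_invFun (hbij t ht).2 y
  have hsm := aux_smooth η ζ hη hζ K L hK hL X y _ rfl hX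
  have h00 : |(0 : ℝ)| < 1 / (1 + K + L) := by simpa using hτ
  have heq : ∀ᶠ t in 𝓝 (0 : ℝ), X t + t • η (X t) + (t ^ 2 / 2) • ζ (X t) = y := by
    filter_upwards [(continuous_abs.tendsto (0 : ℝ)).eventually (gt_mem_nhds h00)] with t ht
    exact (hX t ht _).2 rfl
  obtain ⟨h1, h2⟩ := aux_derivs η ζ hη hζ X y (hsm 0 h00) heq
  refine ⟨deriv X, ?_, fun t ht => ?_, h1, ?_⟩
  · have := heq.self_of_nhds
    simpa using this
  · exact ((hsm t ht).differentiableAt (by norm_num)).hasDerivAt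
  · have key : (fun i => 2 * advf η y i - ζ y i) = (2 : ℝ) • fderiv ℝ η y (η y) - ζ y := ?_
    · rw [key]; exact h2
    funext i
    have hd : DifferentiableAt ℝ η y := hη.differentiable (by norm_num) y
    have hp : ∀ j, pdv (fun z => η z i) j y = fderiv ℝ η y (Pi.single j 1) i := by
      intro j
      rw [pdv, fderiv_apply hd]
      rfl
    have hs : fderiv ℝ η y (η y) i = advf η y i := by
      simp only [advf, hp]
      conv_lhs => rw [pi_eq_sum_univ' (η y)]
      simp [map_sum, Finset.sum_apply]
    simp [hs]

end PaperAC
end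

section
/- Let N ≥ 1, let η, ζ : ℝ^N → ℝ^N be bounded and of class C³ with all partial derivatives up to order 3 bounded, and let u : ℝ^N → ℝ be of class C³ with all partial derivatives up to order 3 bounded. Define Φ_t(x) := x + t·η(x) + (t²/2)·ζ(x) and let τ > 0 be such that Φ_t is a bijection of ℝ^N for |t| < τ. Then for every y ∈ ℝ^N the function t ↦ u(Φ_t⁻¹(y)) is twice differentiable at t = 0, with value u(y), first derivative −∇u(y)·η(y), and second derivative X₀(y) := Σ_{i,j} ∂²u/∂y_i∂y_j (y) η^i(y) η^j(y) + Σ_i ∂u/∂y_i (y) (2((η·∇)η)^i(y) − ζ^i(y)) at t = 0. -/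
open Filter MeasureTheory Topology
open scoped RealInnerProductSpace

namespace PaperAC

theorem fderiv_eq_sum_aux {N : ℕ} {F : Type*} [NormedAddCommGroup F] [NormedSpace ℝ F]
    (L : (Fin N → ℝ) →L[ℝ] F) (v : Fin N → ℝ) : L v = ∑ i, v i • L (Pi.single i 1) := by
  conv_lhs => rw [pi_eq_sum_univ' v]
  rw [map_sum]
  refine Finset.sum_congr rfl fun i _ => ?_
  rw [map_smul]

theorem pdv_sum_aux {N : ℕ} (u : (Fin N → ℝ) → ℝ) (y v : Fin N → ℝ) :
    fderiv ℝ u y v = ∑ i, pdv u i y * v i := by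
  rw [fderiv_eq_sum_aux]
  refine Finset.sum_congr rfl fun i _ => ?_
  simp [pdv, mul_comm]

theorem advf_aux {N : ℕ} (η : (Fin N → ℝ) → (Fin N → ℝ)) (hη : ContDiff ℝ 3 η)
    (y : Fin N → ℝ) : advf η y = fderiv ℝ η y (η y) := by
  funext i
  have hd : DifferentiableAt ℝ η y := (hη.differentiable (by norm_num)) y
  have h : ∀ v, fderiv ℝ (fun z => η z i) y v = fderiv ℝ η y v i := by
    intro v
    have := (hasFDerivAt_pi'.1 hd.hasFDerivAt i).fderiv
    rw [this]; rfl
  rw [← h, pdv_sum_aux]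
  simp [advf, mul_comm]

theorem hess_aux {N : ℕ} (u : (Fin N → ℝ) → ℝ) (hu : ContDiff ℝ 3 u)
    (y v : Fin N → ℝ) : ∑ i, ∑ j, pdv (pdv u i) j y * v i * v j
      = fderiv ℝ (fderiv ℝ u) y v v := by
  have hd : DifferentiableAt ℝ (fderiv ℝ u) y :=
    ((hu.fderiv_right (m := 2) (by norm_num)).differentiable (by norm_num)) y
  have h : ∀ i j, pdv (pdv u i) j y = fderiv ℝ (fderiv ℝ u) y (Pi.single j 1) (Pi.single i 1) := by
    intro i j
    have := (hd.hasFDerivAt.clm_apply (hasFDerivAt_const (Pi.single i (1:ℝ)) y)).fderiv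
    unfold pdv
    rw [this]; simp
  rw [fderiv_eq_sum_aux (fderiv ℝ (fderiv ℝ u) y v) v]
  refine Finset.sum_congr rfl fun i _ => ?_
  rw [fderiv_eq_sum_aux (fderiv ℝ (fderiv ℝ u) y) v]
  simp only [h, smul_eq_mul, sum_apply, smul_apply,
    Finset.mul_sum]
  refine Finset.sum_congr rfl fun j _ => ?_
  ring

theorem inv_smooth_aux {N : ℕ} 
    (η ζ : (Fin N → ℝ) → (Fin N → ℝ))
    (hη : ContDiff ℝ 3 η) (hζ : ContDiff ℝ 3 ζ)
    (Φ : ℝ → (Fin N → ℝ) → (Fin N → ℝ))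
    (hΦ : ∀ t x, Φ t x = x + t • η x + (t ^ 2 / 2) • ζ x)
    (y : Fin N → ℝ) :
    ∃ x : ℝ → (Fin N → ℝ), ContDiffAt ℝ 3 x 0 ∧ ∀ᶠ t in 𝓝 (0 : ℝ), Φ t (x t) = y := by
  let G : ℝ × (Fin N → ℝ) → ℝ × (Fin N → ℝ) := fun p =>
    (p.1, p.2 + p.1 • η p.2 + (p.1 ^ 2 / 2) • ζ p.2)
  have hG : ContDiff ℝ 3 G := by
    have h1 : ContDiff ℝ 3 (fun p : ℝ × (Fin N → ℝ) => η p.2) := hη.comp contDiff_snd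
    have h2 : ContDiff ℝ 3 (fun p : ℝ × (Fin N → ℝ) => ζ p.2) := hζ.comp contDiff_snd
    exact contDiff_fst.prodMk ((contDiff_snd.add (contDiff_fst.smul h1)).add
      (((contDiff_fst.pow 2).div_const 2).smul h2))
  let A : (ℝ × (Fin N → ℝ)) ≃L[ℝ] (ℝ × (Fin N → ℝ)) :=
    ContinuousLinearEquiv.equivOfInverse
      ((ContinuousLinearMap.fst ℝ ℝ (Fin N → ℝ)).prod
        (ContinuousLinearMap.snd ℝ ℝ (Fin N → ℝ) +
          (ContinuousLinearMap.fst ℝ ℝ (Fin N → ℝ)).smulRight (η y)))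
      ((ContinuousLinearMap.fst ℝ ℝ (Fin N → ℝ)).prod
        (ContinuousLinearMap.snd ℝ ℝ (Fin N → ℝ) -
          (ContinuousLinearMap.fst ℝ ℝ (Fin N → ℝ)).smulRight (η y)))
      (by intro p; ext <;> simp) (by intro p; ext <;> simp)
  have hG' : HasFDerivAt G (A : (ℝ × (Fin N → ℝ)) →L[ℝ] (ℝ × (Fin N → ℝ))) (0, y) := by
    have h1 : HasFDerivAt (fun p : ℝ × (Fin N → ℝ) => η p.2) _ (0, y) :=
      ((hη.differentiable (by norm_num)) y).hasFDerivAt.comp (0, y) hasFDerivAt_snd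
    have h2 : HasFDerivAt (fun p : ℝ × (Fin N → ℝ) => ζ p.2) _ (0, y) :=
      ((hζ.differentiable (by norm_num)) y).hasFDerivAt.comp (0, y) hasFDerivAt_snd
    have h3 : HasFDerivAt (fun p : ℝ × (Fin N → ℝ) => p.1 ^ 2 / 2)
        (0 : (ℝ × (Fin N → ℝ)) →L[ℝ] ℝ) (0, y) := by
      have := ((hasFDerivAt_fst (𝕜 := ℝ) (p := ((0:ℝ), y))).pow 2).mul_const (2⁻¹ : ℝ)
      simp only [div_eq_mul_inv]
      refine this.congr_fderiv ?_
      ext <;> simp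
    have h4 : HasFDerivAt G _ (0, y) := (hasFDerivAt_fst (𝕜 := ℝ) (p := ((0:ℝ), y))).prodMk
      ((hasFDerivAt_snd.fun_add (hasFDerivAt_fst.fun_smul h1)).fun_add (h3.fun_smul h2))
    refine h4.congr_fderiv ?_
    ext <;> simp [A]
  have hG0 : G (0, y) = (0, y) := by simp [G]
  let L := hG.contDiffAt.localInverse hG' (by norm_num)
  have hL : ContDiffAt ℝ 3 L (G (0, y)) := hG.contDiffAt.to_localInverse hG' (by norm_num)
  have hR : ∀ᶠ p in 𝓝 (G (0, y)), G (L p) = p :=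
    (hG.contDiffAt.hasStrictFDerivAt' hG' (by norm_num)).eventually_right_inverse
  rw [hG0] at hL hR
  have hc : ContDiffAt ℝ 3 (fun t : ℝ => (t, y)) 0 := contDiffAt_id.prodMk contDiffAt_const
  refine ⟨fun t => (L (t, y)).2, (hL.comp (0:ℝ) hc).snd, ?_⟩
  have := hc.continuousAt.eventually hR
  filter_upwards [this] with t ht
  have h1 : (L (t, y)).1 = t := congrArg Prod.fst ht
  have h2 := congrArg Prod.snd ht
  simp only [G, h1] at h2
  rw [hΦ]; exact h2

/-- For `u ∈ C³` bounded with bounded derivatives and the deformation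
`Φ_t(x) := x + t η(x) + (t²/2) ζ(x)` (bijective for `|t| < τ`), for every `y` the function
`t ↦ u(Φ_t⁻¹(y))` is twice differentiable at `t = 0` with value `u(y)`, first derivative
`−∇u(y)·η(y)` and second derivative `X₀(y)` at `t = 0`. -/
theorem composition_with_inverse_deformation
    (N : ℕ) (hN : 1 ≤ N)
    (η ζ : (Fin N → ℝ) → (Fin N → ℝ))
    (hη : ContDiff ℝ 3 η) (hηb : BddUpTo 3 η)
    (hζ : ContDiff ℝ 3 ζ) (hζb : BddUpTo 3 ζ)
    (u : (Fin N → ℝ) → ℝ)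
    (hu : ContDiff ℝ 3 u) (hub : BddUpTo 3 u)
    (Φ : ℝ → (Fin N → ℝ) → (Fin N → ℝ))
    (hΦ : ∀ t x, Φ t x = x + t • η x + (t ^ 2 / 2) • ζ x)
    (τ : ℝ) (hτ : 0 < τ)
    (hbij : ∀ t : ℝ, |t| < τ → Function.Bijective (Φ t)) :
    ∀ y : Fin N → ℝ, ∃ g' : ℝ → ℝ,
      u (Function.invFun (Φ 0) y) = u y ∧
      (∀ᶠ t in 𝓝 (0 : ℝ),
        HasDerivAt (fun s : ℝ => u (Function.invFun (Φ s) y)) (g' t) t) ∧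
      g' 0 = -(∑ i, pdv u i y * η y i) ∧
      HasDerivAt g' (X0 u η ζ y) 0 := by
  intro y
  obtain ⟨x, hx, hxy⟩ := inv_smooth_aux η ζ hη hζ Φ hΦ y
  have hxe : ∀ᶠ t in 𝓝 (0 : ℝ), Function.invFun (Φ t) y = x t := by
    have : ∀ᶠ t in 𝓝 (0 : ℝ), |t| < τ :=
      (continuous_abs.tendsto' (0:ℝ) 0 abs_zero).eventually (gt_mem_nhds hτ)
    filter_upwards [this, hxy] with t ht h
    rw [← h]
    exact Function.leftInverse_invFun (hbij t ht).1 (x t)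
  have hx0 : x 0 = y := by
    have := hxy.self_of_nhds
    simpa [hΦ] using this
  have hηd := hη.differentiable (by norm_num)
  have hζd := hζ.differentiable (by norm_num)
  have hud := hu.differentiable (by norm_num)
  have hηd2 := (hη.fderiv_right (m := 2) (by norm_num)).differentiable (by norm_num)
  have hζd2 := (hζ.fderiv_right (m := 2) (by norm_num)).differentiable (by norm_num)
  have hud2 := (hu.fderiv_right (m := 2) (by norm_num)).differentiable (by norm_num)
  have hxd : ∀ᶠ t in 𝓝 (0 : ℝ), HasDerivAt x (deriv x t) t := by
    filter_upwards [hx.eventually (by simp)] with t ht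
    exact (ht.differentiableAt (by norm_num)).hasDerivAt
  have hx2 : DifferentiableAt ℝ (deriv x) 0 := by
    have : ContDiffAt ℝ 2 (deriv x) 0 := by
      have h := (hx.fderiv_right (m := 2) (by norm_num)).clm_apply
        (contDiffAt_const (c := (1:ℝ)))
      exact h
    exact this.differentiableAt (by norm_num)
  have hηx : ∀ t, HasDerivAt x (deriv x t) t →
      HasDerivAt (fun s => η (x s)) (fderiv ℝ η (x t) (deriv x t)) t := fun t ht =>
    (hηd (x t)).hasFDerivAt.comp_hasDerivAt t ht
  have hζx : ∀ t, HasDerivAt x (deriv x t) t →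
      HasDerivAt (fun s => ζ (x s)) (fderiv ℝ ζ (x t) (deriv x t)) t := fun t ht =>
    (hζd (x t)).hasFDerivAt.comp_hasDerivAt t ht
  have hid : ∀ᶠ t in 𝓝 (0 : ℝ), deriv x t =
      -(η (x t) + t • ζ (x t) + t • fderiv ℝ η (x t) (deriv x t)
        + (t ^ 2 / 2) • fderiv ℝ ζ (x t) (deriv x t)) := by
    filter_upwards [hxd, hxy.eventually_nhds] with t ht hy
    have h2 : HasDerivAt (fun s : ℝ => s ^ 2 / 2) t t := by
      have := ((hasDerivAt_id t).pow 2).div_const 2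
      simpa using this
    have h1 : HasDerivAt (fun s : ℝ => x s + s • η (x s) + (s ^ 2 / 2) • ζ (x s)) _ t :=
      (ht.fun_add ((hasDerivAt_id t).fun_smul (hηx t ht))).fun_add (h2.fun_smul (hζx t ht))
    have h0 : HasDerivAt (fun _ : ℝ => y) 0 t := hasDerivAt_const _ _
    have h3 := h0.congr_of_eventuallyEq (f₁ := fun s : ℝ => x s + s • η (x s) + (s ^ 2 / 2) • ζ (x s)) (by
      filter_upwards [hy] with s hs
      rw [← hΦ, hs])
    have h4 := h1.unique h3
    rw [eq_neg_iff_add_eq_zero, ← h4]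
    simp only [id]
    module
  have hd0 := hxd.self_of_nhds
  have hx1 : deriv x 0 = -η y := by
    have := hid.self_of_nhds
    simpa [hx0] using this
  have hxx : HasDerivAt (deriv x) ((2:ℝ) • fderiv ℝ η y (η y) - ζ y) 0 := by
    have hA : HasDerivAt (fun s => fderiv ℝ η (x s) (deriv x s)) _ 0 :=
      ((hηd2 (x 0)).hasFDerivAt.comp_hasDerivAt 0 hd0).clm_apply hx2.hasDerivAt
    have hB : HasDerivAt (fun s => fderiv ℝ ζ (x s) (deriv x s)) _ 0 :=
      ((hζd2 (x 0)).hasFDerivAt.comp_hasDerivAt 0 hd0).clm_apply hx2.hasDerivAt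
    have h2 : HasDerivAt (fun s : ℝ => s ^ 2 / 2) 0 0 := by
      have := ((hasDerivAt_id (0:ℝ)).pow 2).div_const 2
      simpa using this
    have hi := hasDerivAt_id (0:ℝ)
    have := ((((hηx 0 hd0).fun_add (hi.fun_smul (hζx 0 hd0))).fun_add
      (hi.fun_smul hA)).fun_add (h2.fun_smul hB)).fun_neg
    have h' := this.congr_of_eventuallyEq (f₁ := deriv x) hid
    refine h'.congr_deriv ?_
    simp only [hx0, hx1, id, map_neg]
    module
  refine ⟨fun t => fderiv ℝ u (x t) (deriv x t), ?_, ?_, ?_, ?_⟩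
  · rw [hxe.self_of_nhds, hx0]
  · filter_upwards [hxd, hxe.eventually_nhds] with t ht he
    refine ((hud (x t)).hasFDerivAt.comp_hasDerivAt t ht).congr_of_eventuallyEq ?_
    filter_upwards [he] with s hs
    simp [hs]
  · simp only [hx0, hx1, map_neg, pdv_sum_aux]
  · have hA : HasDerivAt (fun s => fderiv ℝ u (x s) (deriv x s)) _ 0 :=
      ((hud2 (x 0)).hasFDerivAt.comp_hasDerivAt 0 hd0).clm_apply hxx
    refine hA.congr_deriv ?_
    symm
    simp only [X0, hess_aux u hu, advf_aux η hη, Function.comp, hx0, hx1, map_neg,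
      neg_apply, neg_neg]
    congr 1
    rw [pdv_sum_aux]
    simp
end PaperAC
end

section
/- Let Ω ⊂ ℝ^N be open and bounded, let F : ℝ × ℝ^N → ℝ be of class C³, let u : ℝ^N → ℝ be bounded and of class C³ with all partial derivatives up to order 3 bounded, and let η, ζ : ℝ^N → ℝ^N be bounded and of class C³ with all partial derivatives up to order 3 bounded. Define Φ_t(x) := x + t·η(x) + (t²/2)·ζ(x), let τ > 0 be such that Φ_t is a bijection of ℝ^N for |t| < τ, set u_t(y) := u(Φ_t⁻¹(y)), and define 𝔄₁(t) := ∫_Ω F(u_t(y), ∇u_t(y)) dy for |t| < τ. Then 𝔄₁ is differentiable at t = 0 with 𝔄₁'(0) = ∫_Ω [ F_z(u, ∇u) · (−∇u·η) + Σ_i F_{p_i}(u, ∇u) · ∂/∂x_i(−∇u·η) ] dx. -/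
open Filter MeasureTheory Topology
open scoped RealInnerProductSpace

namespace PaperAC

lemma aux_inv {N : ℕ} (η ζ : (Fin N → ℝ) → (Fin N → ℝ))
    (hη : ContDiff ℝ 3 η) (hζ : ContDiff ℝ 3 ζ)
    (Φ : ℝ → (Fin N → ℝ) → (Fin N → ℝ))
    (hΦ : ∀ t x, Φ t x = x + t • η x + (t ^ 2 / 2) • ζ x)
    (τ : ℝ) (hτ : 0 < τ)
    (hbij : ∀ t : ℝ, |t| < τ → Function.Bijective (Φ t)) (y : Fin N → ℝ) :
    ContDiffAt ℝ 3 (fun p : ℝ × (Fin N → ℝ) => Function.invFun (Φ p.1) p.2) (0, y) := by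
  set G : ℝ × (Fin N → ℝ) → ℝ × (Fin N → ℝ) :=
    fun p => (p.1, p.2 + p.1 • η p.2 + (p.1 ^ 2 / 2) • ζ p.2) with hG
  have hGc : ContDiffAt ℝ 3 G (0, y) := by
    have : ContDiff ℝ 3 G := by fun_prop
    exact this.contDiffAt
  let e : (ℝ × (Fin N → ℝ)) ≃L[ℝ] (ℝ × (Fin N → ℝ)) :=
    (ContinuousLinearEquiv.refl ℝ ℝ).skewProd (ContinuousLinearEquiv.refl ℝ (Fin N → ℝ))
      ((ContinuousLinearMap.id ℝ ℝ).smulRight (η y))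
  have h1 : HasFDerivAt (fun p : ℝ × (Fin N → ℝ) => p.1) (ContinuousLinearMap.fst ℝ ℝ _)
      ((0 : ℝ), y) := hasFDerivAt_fst
  have h2 : HasFDerivAt (fun p : ℝ × (Fin N → ℝ) => p.2) (ContinuousLinearMap.snd ℝ ℝ _)
      ((0 : ℝ), y) := hasFDerivAt_snd
  have hη' : HasFDerivAt (fun p : ℝ × (Fin N → ℝ) => η p.2) _ ((0 : ℝ), y) :=
    ((hη.differentiable (by norm_num)).comp differentiable_snd _).hasFDerivAt
  have hζ' : HasFDerivAt (fun p : ℝ × (Fin N → ℝ) => ζ p.2) _ ((0 : ℝ), y) :=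
    ((hζ.differentiable (by norm_num)).comp differentiable_snd _).hasFDerivAt
  have hGd : HasFDerivAt G (e : (ℝ × (Fin N → ℝ)) →L[ℝ] (ℝ × (Fin N → ℝ))) (0, y) := by
    have := h1.prodMk ((h2.add (h1.smul hη')).add
      ((((h1.pow 2)).mul_const ((1:ℝ)/2)).smul hζ'))
    refine (this.congr_fderiv ?_).congr_of_eventuallyEq ?_
    · ext v <;> simp [e]
    · refine Eventually.of_forall fun p => ?_
      simp [hG, div_eq_mul_inv]
  have h3 : (3 : WithTop ℕ∞) ≠ 0 := by norm_num
  have hs := hGc.hasStrictFDerivAt' hGd h3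
  have hinv : ∀ᶠ p in 𝓝 ((0 : ℝ), y),
      (fun p : ℝ × (Fin N → ℝ) => (p.1, Function.invFun (Φ p.1) p.2)) (G p) = p := by
    have : ∀ᶠ p : ℝ × (Fin N → ℝ) in 𝓝 ((0 : ℝ), y), |p.1| < τ := by
      have hc : ContinuousAt (fun p : ℝ × (Fin N → ℝ) => |p.1|) ((0 : ℝ), y) := by fun_prop
      exact hc.eventually_lt continuousAt_const (by simpa using hτ)
    filter_upwards [this] with p hp
    have h := Function.leftInverse_invFun (hbij p.1 hp).1 p.2
    rw [hΦ] at h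
    ext1
    · rfl
    · exact h
  have hu := hs.localInverse_unique
    (g := fun p : ℝ × (Fin N → ℝ) => (p.1, Function.invFun (Φ p.1) p.2)) hinv
  have hloc := hGc.to_localInverse hGd h3
  have hG0 : G (0, y) = (0, y) := by simp [hG]
  rw [hG0] at hu hloc
  have : ContDiffAt ℝ 3 (fun p : ℝ × (Fin N → ℝ) => (p.1, Function.invFun (Φ p.1) p.2)) (0, y) :=
    hloc.congr_of_eventuallyEq hu
  exact this.snd

lemma aux_sum {N : ℕ} (L : (Fin N → ℝ) →L[ℝ] ℝ) (v : Fin N → ℝ) :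
    L v = ∑ i, L (Pi.single i 1) * v i := by
  conv_lhs => rw [← Finset.univ_sum_single v]
  rw [map_sum]
  refine Finset.sum_congr rfl fun i _ => ?_
  have : (Pi.single i (v i) : Fin N → ℝ) = v i • Pi.single i (1 : ℝ) := by
    rw [← Pi.single_smul]; simp
  rw [this, map_smul, smul_eq_mul, mul_comm]

lemma aux_dt {N : ℕ} (u : (Fin N → ℝ) → ℝ) (hu : ContDiff ℝ 3 u)
    (η ζ : (Fin N → ℝ) → (Fin N → ℝ))
    (hη : ContDiff ℝ 3 η) (hζ : ContDiff ℝ 3 ζ)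
    (Φ : ℝ → (Fin N → ℝ) → (Fin N → ℝ))
    (hΦ : ∀ t x, Φ t x = x + t • η x + (t ^ 2 / 2) • ζ x)
    (τ : ℝ) (hτ : 0 < τ)
    (hbij : ∀ t : ℝ, |t| < τ → Function.Bijective (Φ t)) (y : Fin N → ℝ) :
    fderiv ℝ (fun p : ℝ × (Fin N → ℝ) => u (Function.invFun (Φ p.1) p.2)) (0, y) (1, 0)
      = nGradDot u η y := by
  have hI := aux_inv η ζ hη hζ Φ hΦ τ hτ hbij y
  have h0 : Function.invFun (Φ 0) y = y := by
    have h := Function.leftInverse_invFun (hbij 0 (by simpa using hτ)).1 y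
    rw [hΦ] at h
    simpa using h
  have hd : DifferentiableAt ℝ (fun p : ℝ × (Fin N → ℝ) => Function.invFun (Φ p.1) p.2)
    ((0 : ℝ), y) := hI.differentiableAt (by norm_num)
  set g : ℝ → (Fin N → ℝ) := fun t => Function.invFun (Φ t) y with hg
  have hc : HasDerivAt (fun t : ℝ => (t, y)) ((1 : ℝ), (0 : Fin N → ℝ)) 0 :=
    (hasDerivAt_id 0).prodMk (hasDerivAt_const 0 y)
  have hgd : HasDerivAt g (fderiv ℝ (fun p : ℝ × (Fin N → ℝ) => Function.invFun (Φ p.1) p.2)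
      (0, y) (1, 0)) 0 := by
    have := HasFDerivAt.comp_hasDerivAt (f := fun t : ℝ => (t, y)) (0 : ℝ) hd.hasFDerivAt hc
    exact this
  set g' := fderiv ℝ (fun p : ℝ × (Fin N → ℝ) => Function.invFun (Φ p.1) p.2) (0, y) (1, 0)
  have hg0 : g 0 = y := h0
  have hηg : HasDerivAt (fun t => η (g t)) (fderiv ℝ η (g 0) g') 0 :=
    ((hη.differentiable (by norm_num)) _).hasFDerivAt.comp_hasDerivAt (0 : ℝ) hgd
  have hζg : HasDerivAt (fun t => ζ (g t)) (fderiv ℝ ζ (g 0) g') 0 :=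
    ((hζ.differentiable (by norm_num)) _).hasFDerivAt.comp_hasDerivAt (0 : ℝ) hgd
  have hug : HasDerivAt (fun t => u (g t)) (fderiv ℝ u (g 0) g') 0 :=
    ((hu.differentiable (by norm_num)) _).hasFDerivAt.comp_hasDerivAt (0 : ℝ) hgd
  have hsum := (hgd.add ((hasDerivAt_id (0 : ℝ)).smul hηg)).add
    ((((hasDerivAt_id (0 : ℝ)).pow 2).mul_const ((1 : ℝ) / 2)).smul hζg)
  have hconst : HasDerivAt (fun _ : ℝ => y) (0 : Fin N → ℝ) 0 := hasDerivAt_const 0 y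
  have hev : (fun _ : ℝ => y) =ᶠ[𝓝 0] (fun t => g t + t • η (g t) + (t ^ 2 / 2) • ζ (g t)) := by
    have hlt : ∀ᶠ t : ℝ in 𝓝 0, |t| < τ := by
      have hc : ContinuousAt (fun p : ℝ => |p|) 0 := by fun_prop
      exact hc.eventually_lt continuousAt_const (by simpa using hτ)
    filter_upwards [hlt] with t ht
    have h := Function.rightInverse_invFun (hbij t ht).2 y
    rw [hΦ] at h
    exact h.symm
  have hsum' := hsum.unique ((hconst.congr_of_eventuallyEq hev.symm).congr_of_eventuallyEq
    (Eventually.of_forall fun t => by simp [hg, div_eq_mul_inv]))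
  have hg' : g' = - η y := by
    simp [hg0] at hsum'
    exact eq_neg_of_add_eq_zero_left hsum'
  have hwd : DifferentiableAt ℝ (fun p : ℝ × (Fin N → ℝ) => u (Function.invFun (Φ p.1) p.2))
    ((0 : ℝ), y) := ((hu.differentiable (by norm_num)) _).comp _ hd
  have hw := HasFDerivAt.comp_hasDerivAt (f := fun t : ℝ => (t, y)) (0 : ℝ) hwd.hasFDerivAt hc
  have := hw.unique hug
  rw [this, hg0, hg', map_neg, aux_sum, nGradDot]
  rfl

lemma aux_grad {N : ℕ} (w : ℝ × (Fin N → ℝ) → ℝ) (t : ℝ) (y : Fin N → ℝ)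
    (h : DifferentiableAt ℝ w (t, y)) :
    grad (fun z => w (t, z)) y = fun i => fderiv ℝ w (t, y) (0, Pi.single i 1) := by
  funext i
  have hc : HasFDerivAt (fun z : Fin N → ℝ => (t, z)) (ContinuousLinearMap.inr ℝ ℝ _) y :=
    hasFDerivAt_prodMk_right t y
  have : HasFDerivAt (fun z => w (t, z)) _ y := h.hasFDerivAt.comp y hc
  rw [grad, pdv, this.fderiv]
  simp

lemma aux_main {N : ℕ} (Ω : Set (Fin N → ℝ)) (hΩo : IsOpen Ω) (hΩb : Bornology.IsBounded Ω)
    (F : ℝ × (Fin N → ℝ) → ℝ) (hF : ContDiff ℝ 3 F)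
    (w : ℝ × (Fin N → ℝ) → ℝ) (hw : ∀ y, ContDiffAt ℝ 3 w (0, y))
    (φ : (Fin N → ℝ) → ℝ) (hφ : ∀ y, fderiv ℝ w (0, y) (1, 0) = φ y) :
    HasDerivAt (fun t => ∫ y in Ω, F (w (t, y), grad (fun z => w (t, z)) y))
      (∫ x in Ω,
        (Fz F (w (0, x)) (grad (fun z => w (0, z)) x) * φ x
          + ∑ i, Fp F i (w (0, x)) (grad (fun z => w (0, z)) x) * pdv φ i x)) 0 := by
  set P : ℝ × (Fin N → ℝ) → ℝ × (Fin N → ℝ) :=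
    fun p => (w p, fun i => fderiv ℝ w p (0, Pi.single i 1)) with hP
  set H : ℝ × (Fin N → ℝ) → ℝ := fun p => F (P p) with hH
  have hPc : ∀ p, ContDiffAt ℝ 3 w p → ContDiffAt ℝ 2 P p := by
    intro p hp
    refine (hp.of_le (by norm_num)).prodMk (contDiffAt_pi.2 fun i => ?_)
    exact (hp.fderiv_right (m := 2) (by norm_num)).clm_apply contDiffAt_const
  have hHc : ∀ p, ContDiffAt ℝ 3 w p → ContDiffAt ℝ 2 H p := fun p hp =>
    ContDiffAt.comp p ((hF.of_le (by norm_num)).contDiffAt) (hPc p hp)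
  have hHc' : ∀ p, ContDiffAt ℝ 3 w p → ContinuousAt (fderiv ℝ H) p := fun p hp =>
    ((hHc p hp).fderiv_right (m := 1) (by norm_num)).continuousAt
  have hK : IsCompact (closure Ω) := hΩb.isCompact_closure
  have hinj : ∀ t : ℝ, Continuous (fun y : Fin N → ℝ => (t, y)) := fun t => by fun_prop
  have hKc : ContinuousOn (fun y => ‖fderiv ℝ H (0, y)‖) (closure Ω) := by
    intro y _
    exact (ContinuousAt.comp (f := fun y : Fin N → ℝ => ((0 : ℝ), y)) (x := y)
      (hHc' (0, y) (hw y)) (hinj 0).continuousAt).norm.continuousWithinAt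
  obtain ⟨C, hC⟩ := hK.bddAbove_image hKc
  have hev : ∀ᶠ t in 𝓝 (0 : ℝ), ∀ y ∈ closure Ω,
      ContDiffAt ℝ 3 w (t, y) ∧ ‖fderiv ℝ H (t, y)‖ ≤ C + 1 := by
    refine hK.eventually_forall_of_forall_eventually
      (P := fun t y => ContDiffAt ℝ 3 w (t, y) ∧ ‖fderiv ℝ H (t, y)‖ ≤ C + 1) fun y hy => ?_
    have h1 := (hw y).eventually (by decide)
    have h2 : ∀ᶠ p in 𝓝 ((0 : ℝ), y), ‖fderiv ℝ H p‖ < C + 1 :=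
      (hHc' _ (hw y)).norm.eventually_lt continuousAt_const (by
        have := hC (Set.mem_image_of_mem _ hy)
        linarith)
    filter_upwards [h1, h2] with p hp1 hp2
    exact ⟨hp1, hp2.le⟩
  have hcurve : ∀ (t : ℝ) (y : Fin N → ℝ),
      HasDerivAt (fun t : ℝ => (t, y)) ((1 : ℝ), (0 : Fin N → ℝ)) t := fun t y =>
    (hasDerivAt_id t).prodMk (hasDerivAt_const t y)
  have hHcont : ∀ t, (∀ y ∈ closure Ω, ContDiffAt ℝ 3 w (t, y)) →
      ContinuousOn (fun y => H (t, y)) (closure Ω) := fun t ht y hy =>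
    (ContinuousAt.comp (f := fun y : Fin N → ℝ => (t, y)) (x := y)
      (hHc _ (ht y hy)).continuousAt (hinj t).continuousAt).continuousWithinAt
  have key := (hasDerivAt_integral_of_dominated_loc_of_deriv_le (μ := volume.restrict Ω)
    (F := fun t y => H (t, y)) (F' := fun t y => fderiv ℝ H (t, y) (1, 0))
    (x₀ := (0 : ℝ)) (bound := fun _ => C + 1) hev
    (by
      filter_upwards [hev] with t ht
      exact ((hHcont t fun y hy => (ht y hy).1).mono subset_closure).aestronglyMeasurable
        hΩo.measurableSet)
    (by
      have : IntegrableOn (fun y => H (0, y)) (closure Ω) :=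
        (hHcont 0 fun y _ => hw y).integrableOn_compact hK
      exact this.mono_set subset_closure)
    (by
      refine ContinuousOn.aestronglyMeasurable (fun y _ => ?_) hΩo.measurableSet
      exact ((ContinuousAt.comp (f := fun y : Fin N → ℝ => ((0 : ℝ), y)) (x := y)
        (hHc' (0, y) (hw y)) (hinj 0).continuousAt).clm_apply
          continuousAt_const).continuousWithinAt)
    (by
      refine (ae_restrict_iff' hΩo.measurableSet).2 (Eventually.of_forall fun y hy t ht => ?_)
      refine (ContinuousLinearMap.le_opNorm _ _).trans ?_
      have : ‖((1 : ℝ), (0 : Fin N → ℝ))‖ = 1 := by simp [Prod.norm_def]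
      rw [this, mul_one]
      exact (ht y (subset_closure hy)).2)
    (by
      have : IsFiniteMeasure (volume.restrict Ω) :=
        ⟨by simpa using hΩb.measure_lt_top⟩
      exact integrable_const _)
    (by
      refine (ae_restrict_iff' hΩo.measurableSet).2 (Eventually.of_forall fun y hy t ht => ?_)
      have hd := (hHc _ (ht y (subset_closure hy)).1).differentiableAt (by norm_num)
      exact HasFDerivAt.comp_hasDerivAt (f := fun t : ℝ => (t, y)) (l := H) t hd.hasFDerivAt (hcurve t y))).2
  have hfin : (∫ y in Ω, fderiv ℝ H (0, y) (1, 0)) = ∫ x in Ω,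
        (Fz F (w (0, x)) (grad (fun z => w (0, z)) x) * φ x
          + ∑ i, Fp F i (w (0, x)) (grad (fun z => w (0, z)) x) * pdv φ i x) := by
    congr 1
    funext y
    have hwd := (hw y).differentiableAt (by norm_num)
    have hPd := (hPc _ (hw y)).differentiableAt (by norm_num)
    have hFd : DifferentiableAt ℝ F (P (0, y)) := hF.differentiable (by norm_num) _
    have hw2 : DifferentiableAt ℝ (fderiv ℝ w) (0, y) :=
      ((hw y).fderiv_right (m := 2) (by norm_num)).differentiableAt (by norm_num)
    have hH1 : fderiv ℝ H (0, y) = (fderiv ℝ F (P (0, y))).comp (fderiv ℝ P (0, y)) :=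
      fderiv_comp _ hFd hPd
    have hsymm : IsSymmSndFDerivAt ℝ w (0, y) := (hw y).isSymmSndFDerivAt (by simp; norm_num)
    have hev2 : ∀ v a, fderiv ℝ (fun p => fderiv ℝ w p v) (0, y) a
        = fderiv ℝ (fderiv ℝ w) (0, y) a v := by
      intro v a
      have := hw2.hasFDerivAt.clm_apply (hasFDerivAt_const v ((0 : ℝ), y))
      rw [this.fderiv]; simp
    have hpdv : ∀ i, fderiv ℝ (fderiv ℝ w) (0, y) (1, 0) (0, Pi.single i 1) = pdv φ i y := by
      intro i
      rw [hsymm.eq, ← hev2]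
      have hφ' : φ = fun z => (fun p => fderiv ℝ w p (1, 0)) ((0 : ℝ), z) := by
        funext z; exact (hφ z).symm
      have hdd : DifferentiableAt ℝ (fun p => fderiv ℝ w p (1, 0)) ((0 : ℝ), y) :=
        hw2.clm_apply (differentiableAt_const _)
      have := congrFun (aux_grad _ 0 y hdd) i
      rw [← this, ← hφ', grad]
    have hP1 : fderiv ℝ P (0, y) (1, 0) = (φ y, fun i => pdv φ i y) := by
      have hp2 : ∀ i, DifferentiableAt ℝ (fun p => fderiv ℝ w p (0, Pi.single i 1))
          ((0 : ℝ), y) := fun i => hw2.clm_apply (differentiableAt_const _)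
      have := hwd.hasFDerivAt.prodMk (hasFDerivAt_pi.2 fun i => (hp2 i).hasFDerivAt)
      rw [show fderiv ℝ P (0, y) = _ from this.fderiv]
      ext1
      · simpa using hφ y
      · funext i
        simp [hev2, hpdv]
    have hPy : P (0, y) = (w (0, y), grad (fun z => w (0, z)) y) := by
      rw [aux_grad w 0 y hwd]
    rw [hH1, ContinuousLinearMap.comp_apply, hP1, hPy]
    set L := fderiv ℝ F (w (0, y), grad (fun z => w (0, z)) y) with hL
    have hsplit : ((φ y, fun i => pdv φ i y) : ℝ × (Fin N → ℝ))
        = φ y • ((1 : ℝ), (0 : Fin N → ℝ)) + ((0 : ℝ), fun i => pdv φ i y) := by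
      ext1 <;> simp
    rw [hsplit, map_add, map_smul, smul_eq_mul, mul_comm]
    have := aux_sum (L.comp (ContinuousLinearMap.inr ℝ ℝ (Fin N → ℝ))) (fun i => pdv φ i y)
    simp only [ContinuousLinearMap.comp_apply, ContinuousLinearMap.inr_apply] at this
    rw [this]
    rfl
  rw [← hfin]
  refine key.congr_of_eventuallyEq ?_
  filter_upwards [hev] with t ht
  refine setIntegral_congr_fun hΩo.measurableSet fun y hy => ?_
  simp only [hH, hP]
  rw [aux_grad w t y ((ht y (subset_closure hy)).1.differentiableAt (by norm_num))]

/-- First inner variation via direct calculation: with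
`𝔄₁(t) := ∫_Ω F(u_t, ∇u_t)` where `u_t = u ∘ Φ_t⁻¹`, `𝔄₁` is differentiable at `t = 0` and
`𝔄₁'(0) = ∫_Ω [F_z(u,∇u)(−∇u·η) + ∑_i F_{p_i}(u,∇u) ∂_i(−∇u·η)] dx`. -/
theorem first_inner_variation_direct
    (N : ℕ) (Ω : Set (Fin N → ℝ)) (hΩo : IsOpen Ω) (hΩb : Bornology.IsBounded Ω)
    (F : ℝ × (Fin N → ℝ) → ℝ) (hF : ContDiff ℝ 3 F)
    (u : (Fin N → ℝ) → ℝ) (hu : ContDiff ℝ 3 u) (hub : BddUpTo 3 u)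
    (η ζ : (Fin N → ℝ) → (Fin N → ℝ))
    (hη : ContDiff ℝ 3 η) (hηb : BddUpTo 3 η)
    (hζ : ContDiff ℝ 3 ζ) (hζb : BddUpTo 3 ζ)
    (Φ : ℝ → (Fin N → ℝ) → (Fin N → ℝ))
    (hΦ : ∀ t x, Φ t x = x + t • η x + (t ^ 2 / 2) • ζ x)
    (τ : ℝ) (hτ : 0 < τ)
    (hbij : ∀ t : ℝ, |t| < τ → Function.Bijective (Φ t)) :
    HasDerivAt (innerA Ω F u Φ)
      (∫ x in Ω,
        (Fz F (u x) (grad u x) * nGradDot u η x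
          + ∑ i, Fp F i (u x) (grad u x) * pdv (nGradDot u η) i x)) 0 := by
  have h0 : ∀ y, Function.invFun (Φ 0) y = y := by
    intro y
    have h := Function.leftInverse_invFun (hbij 0 (by simpa using hτ)).1 y
    rw [hΦ] at h
    simpa using h
  have h := aux_main Ω hΩo hΩb F hF
    (fun p : ℝ × (Fin N → ℝ) => u (Function.invFun (Φ p.1) p.2))
    (fun y => ContDiffAt.comp _ hu.contDiffAt (aux_inv η ζ hη hζ Φ hΦ τ hτ hbij y))
    (nGradDot u η) (aux_dt u hu η ζ hη hζ Φ hΦ τ hτ hbij)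
  simp only [h0] at h
  exact h

end PaperAC
end

section
/- Let Ω ⊂ ℝ^N be open and bounded, let F : ℝ × ℝ^N → ℝ be of class C³, let u : ℝ^N → ℝ be bounded and of class C³ with all partial derivatives up to order 3 bounded, and let η, ζ : ℝ^N → ℝ^N be bounded and of class C³ with all partial derivatives up to order 3 bounded. Define Φ_t(x) := x + t·η(x) + (t²/2)·ζ(x), let τ > 0 be such that Φ_t is a bijection of ℝ^N for |t| < τ, set u_t(y) := u(Φ_t⁻¹(y)) and 𝔄₁(t) := ∫_Ω F(u_t, ∇u_t) dy. For φ : ℝ^N → ℝ bounded C³ with bounded derivatives, define dA(u, φ) := (d/dt)|_{t=0} ∫_Ω F(u + tφ, ∇u + t∇φ) dx and d²A(u, φ) := (d²/dt²)|_{t=0} ∫_Ω F(u + tφ, ∇u + t∇φ) dx. Then 𝔄₁'(0) = dA(u, −∇u·η) and 𝔄₁''(0) = d²A(u, −∇u·η) + dA(u, X₀), where X₀ := Σ_{i,j} ∂²u/∂x_i∂x_j η^i η^j + Σ_i ∂u/∂x_i (2((η·∇)η)^i − ζ^i). -/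
open Filter MeasureTheory Topology
open scoped RealInnerProductSpace

namespace PaperAC

theorem L1 {N : ℕ} {Ω : Set (Fin N → ℝ)} (hΩo : IsOpen Ω) (hΩb : Bornology.IsBounded Ω)
    {δ : ℝ} {g g' : ℝ × (Fin N → ℝ) → ℝ}
    (hg : ∀ p : ℝ × (Fin N → ℝ), |p.1| < δ → ContinuousAt g p)
    (hg' : ∀ p : ℝ × (Fin N → ℝ), |p.1| < δ → ContinuousAt g' p)
    (hd : ∀ (t : ℝ) (y : Fin N → ℝ), |t| < δ → HasDerivAt (fun s => g (s, y)) (g' (t, y)) t)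
    (t : ℝ) (ht : |t| < δ) :
    IntegrableOn (fun y => g' (t, y)) Ω ∧
    HasDerivAt (fun s => ∫ y in Ω, g (s, y)) (∫ y in Ω, g' (t, y)) t := by
  have hcont : ∀ {h : ℝ × (Fin N → ℝ) → ℝ}, (∀ p : ℝ × (Fin N → ℝ), |p.1| < δ → ContinuousAt h p) →
      ∀ s : ℝ, |s| < δ → Continuous (fun y => h (s, y)) := by
    intro h hh s hs
    rw [continuous_iff_continuousAt]
    intro y
    exact ContinuousAt.comp (f := fun y : Fin N → ℝ => (s, y)) (hh (s, y) hs) (by fun_prop)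
  have hK : IsCompact (closure Ω) := hΩb.isCompact_closure
  have hint : ∀ {h : (Fin N → ℝ) → ℝ}, Continuous h → IntegrableOn h Ω := fun hh =>
    (hh.continuousOn.integrableOn_compact hK).mono_set subset_closure
  set ε : ℝ := (δ - |t|) / 2 with hε
  have hε0 : 0 < ε := by rw [hε]; linarith
  have hball : ∀ s ∈ Metric.closedBall t ε, |s| < δ := by
    intro s hs
    rw [Metric.mem_closedBall, Real.dist_eq] at hs
    have := abs_sub_abs_le_abs_sub s t
    rw [hε] at hs
    linarith
  have hcomp : IsCompact (Metric.closedBall t ε ×ˢ closure Ω) := (isCompact_closedBall t ε).prod hK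
  obtain ⟨C, hC⟩ := hcomp.exists_bound_of_continuousOn (f := g')
    (fun p hp => (hg' p (hball p.1 hp.1)).continuousWithinAt)
  have hfin : volume Ω < ⊤ := (measure_mono subset_closure).trans_lt hK.measure_lt_top
  refine hasDerivAt_integral_of_dominated_loc_of_deriv_le (μ := volume.restrict Ω)
    (F := fun s y => g (s, y)) (F' := fun s y => g' (s, y)) (bound := fun _ => C)
    (Metric.closedBall_mem_nhds t hε0) ?_ ?_ ?_ ?_ ?_ ?_
  · filter_upwards [Metric.closedBall_mem_nhds t hε0] with s hs
    exact (hcont hg s (hball s hs)).aestronglyMeasurable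
  · exact hint (hcont hg t ht)
  · exact (hcont hg' t ht).aestronglyMeasurable
  · refine (ae_restrict_iff' hΩo.measurableSet).2 (Eventually.of_forall fun y hy s hs => ?_)
    exact hC (s, y) ⟨hs, subset_closure hy⟩
  · exact integrableOn_const hfin.ne
  · exact Eventually.of_forall fun y s hs => hd s y (hball s hs)

theorem L3a {N : ℕ} {Ω : Set (Fin N → ℝ)} (hΩo : IsOpen Ω) (hΩb : Bornology.IsBounded Ω)
    {F : ℝ × (Fin N → ℝ) → ℝ} (hF : ContDiff ℝ 3 F)
    {δ : ℝ} {w w1 : ℝ × (Fin N → ℝ) → ℝ × (Fin N → ℝ)}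
    (hw : ∀ p : ℝ × (Fin N → ℝ), |p.1| < δ → ContinuousAt w p)
    (hw1 : ∀ p : ℝ × (Fin N → ℝ), |p.1| < δ → ContinuousAt w1 p)
    (hd : ∀ (t : ℝ) (y : Fin N → ℝ), |t| < δ → HasDerivAt (fun s => w (s, y)) (w1 (t, y)) t)
    (t : ℝ) (ht : |t| < δ) :
    IntegrableOn (fun y => fderiv ℝ F (w (t, y)) (w1 (t, y))) Ω ∧
    HasDerivAt (fun s => ∫ y in Ω, F (w (s, y)))
      (∫ y in Ω, fderiv ℝ F (w (t, y)) (w1 (t, y))) t := by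
  refine L1 hΩo hΩb (g := fun p => F (w p)) (g' := fun p => fderiv ℝ F (w p) (w1 p)) ?_ ?_ ?_ t ht
  · intro p hp
    exact hF.continuous.continuousAt.comp (hw p hp)
  · intro p hp
    have h1 : Continuous (fderiv ℝ F) := hF.continuous_fderiv (by norm_num)
    exact ContinuousAt.clm_apply (ContinuousAt.comp (g := fderiv ℝ F) h1.continuousAt (hw p hp)) (hw1 p hp)
  · intro s y hs
    exact ((hF.differentiable (by norm_num)) (w (s, y))).hasFDerivAt.comp_hasDerivAt s (hd s y hs)

theorem L3b {N : ℕ} {Ω : Set (Fin N → ℝ)} (hΩo : IsOpen Ω) (hΩb : Bornology.IsBounded Ω)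
    {F : ℝ × (Fin N → ℝ) → ℝ} (hF : ContDiff ℝ 3 F)
    {δ : ℝ} (hδ : 0 < δ) {w w1 w2 : ℝ × (Fin N → ℝ) → ℝ × (Fin N → ℝ)}
    (hw : ∀ p : ℝ × (Fin N → ℝ), |p.1| < δ → ContinuousAt w p)
    (hw1 : ∀ p : ℝ × (Fin N → ℝ), |p.1| < δ → ContinuousAt w1 p)
    (hw2 : ∀ p : ℝ × (Fin N → ℝ), |p.1| < δ → ContinuousAt w2 p)
    (hd : ∀ (t : ℝ) (y : Fin N → ℝ), |t| < δ → HasDerivAt (fun s => w (s, y)) (w1 (t, y)) t)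
    (hd1 : ∀ (t : ℝ) (y : Fin N → ℝ), |t| < δ → HasDerivAt (fun s => w1 (s, y)) (w2 (t, y)) t) :
    IntegrableOn (fun y => fderiv ℝ (fderiv ℝ F) (w (0, y)) (w1 (0, y)) (w1 (0, y))
        + fderiv ℝ F (w (0, y)) (w2 (0, y))) Ω ∧
    deriv (deriv (fun s => ∫ y in Ω, F (w (s, y)))) 0 =
      ∫ y in Ω, (fderiv ℝ (fderiv ℝ F) (w (0, y)) (w1 (0, y)) (w1 (0, y))
        + fderiv ℝ F (w (0, y)) (w2 (0, y))) := by
  have hF1 : ContDiff ℝ 2 (fderiv ℝ F) := hF.fderiv_right (by norm_num)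
  have hc1 : Continuous (fderiv ℝ F) := hF1.continuous
  have hc2 : Continuous (fderiv ℝ (fderiv ℝ F)) := hF1.continuous_fderiv (by norm_num)
  have key := L1 hΩo hΩb (δ := δ) (g := fun p => fderiv ℝ F (w p) (w1 p))
    (g' := fun p => fderiv ℝ (fderiv ℝ F) (w p) (w1 p) (w1 p) + fderiv ℝ F (w p) (w2 p))
    ?_ ?_ ?_ 0 (by simpa using hδ)
  · refine ⟨key.1, ?_⟩
    rw [← key.2.deriv]
    apply Filter.EventuallyEq.deriv_eq
    have : ∀ᶠ t : ℝ in 𝓝 0, |t| < δ := by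
      have := Metric.ball_mem_nhds (0 : ℝ) hδ
      filter_upwards [this] with t ht
      simpa using ht
    filter_upwards [this] with t ht
    exact (L3a hΩo hΩb hF hw hw1 hd t ht).2.deriv
  · intro p hp
    exact ContinuousAt.clm_apply (ContinuousAt.comp (g := fderiv ℝ F) hc1.continuousAt (hw p hp)) (hw1 p hp)
  · intro p hp
    exact ((ContinuousAt.comp (g := fderiv ℝ (fderiv ℝ F)) hc2.continuousAt (hw p hp)).clm_apply
      (hw1 p hp)).clm_apply (hw1 p hp) |>.add
      (ContinuousAt.clm_apply (ContinuousAt.comp (g := fderiv ℝ F) hc1.continuousAt (hw p hp)) (hw2 p hp))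
  · intro s y hs
    have h1 := ((hF1.differentiable (by norm_num)) (w (s, y))).hasFDerivAt.comp_hasDerivAt s (hd s y hs)
    exact h1.clm_apply (hd1 s y hs)

theorem smooth_inv {N : ℕ} 
    (η ζ : (Fin N → ℝ) → (Fin N → ℝ))
    (hη : ContDiff ℝ 3 η) (hηb : BddUpTo 3 η)
    (hζ : ContDiff ℝ 3 ζ) (hζb : BddUpTo 3 ζ)
    (Φ : ℝ → (Fin N → ℝ) → (Fin N → ℝ))
    (hΦ : ∀ t x, Φ t x = x + t • η x + (t ^ 2 / 2) • ζ x)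
    (τ : ℝ) (hτ : 0 < τ)
    (hbij : ∀ t : ℝ, |t| < τ → Function.Bijective (Φ t)) :
    ∃ δ : ℝ, 0 < δ ∧ δ ≤ τ ∧ ∀ p : ℝ × (Fin N → ℝ), |p.1| < δ →
      ContDiffAt ℝ 3 (fun q : ℝ × (Fin N → ℝ) => Function.invFun (Φ q.1) q.2) p := by
  obtain ⟨C1, hC1⟩ := hηb 1 (by norm_num)
  obtain ⟨C2, hC2⟩ := hζb 1 (by norm_num)
  simp only [norm_iteratedFDeriv_one] at hC1 hC2
  have h1 : 0 ≤ C1 := (norm_nonneg _).trans (hC1 0)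
  have h2 : 0 ≤ C2 := (norm_nonneg _).trans (hC2 0)
  have hpos : 0 < 1 + C1 + C2 := by linarith
  refine ⟨min τ (min 1 (1 / (1 + C1 + C2))), by positivity, min_le_left _ _, ?_⟩
  rintro ⟨t, y⟩ hp
  simp only [lt_min_iff] at hp
  obtain ⟨hp1, hp2, hp3⟩ := hp
  have hsm : |t| * (C1 + C2) < 1 := by
    rw [lt_div_iff₀ hpos] at hp3
    nlinarith [abs_nonneg t]
  let G : ℝ × (Fin N → ℝ) → ℝ × (Fin N → ℝ) :=
    fun q => (q.1, q.2 + q.1 • η q.2 + (q.1 ^ 2 / 2) • ζ q.2)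
  obtain ⟨x, hx⟩ := (hbij t hp1).2 y
  have hG : ContDiff ℝ 3 G := by
    have a1 : ContDiff ℝ 3 (fun q : ℝ × (Fin N → ℝ) => η q.2) := hη.comp contDiff_snd
    have a2 : ContDiff ℝ 3 (fun q : ℝ × (Fin N → ℝ) => ζ q.2) := hζ.comp contDiff_snd
    exact contDiff_fst.prodMk ((contDiff_snd.add (contDiff_fst.smul a1)).add
      (((contDiff_fst.pow 2).div_const 2).smul a2))
  have hGx : G (t, x) = (t, y) := by simp only [G]; rw [← hΦ, hx]
  have hGd : HasFDerivAt G (fderiv ℝ G (t, x)) (t, x) :=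
    (hG.differentiable (by norm_num) (t, x)).hasFDerivAt
  have hformula : ∀ (s : ℝ) (ξ : Fin N → ℝ), fderiv ℝ G (t, x) (s, ξ) =
      (s, ξ + (t • fderiv ℝ η x ξ + s • η x) + ((t ^ 2 / 2) • fderiv ℝ ζ x ξ + (t * s) • ζ x)) := by
    intro s ξ
    have e1 : HasFDerivAt (fun q : ℝ × (Fin N → ℝ) => η q.2)
        ((fderiv ℝ η x).comp (ContinuousLinearMap.snd ℝ ℝ (Fin N → ℝ))) (t, x) :=
      HasFDerivAt.comp (g := η) (t, x) ((hη.differentiable (by norm_num) x).hasFDerivAt) hasFDerivAt_snd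
    have e2 : HasFDerivAt (fun q : ℝ × (Fin N → ℝ) => ζ q.2)
        ((fderiv ℝ ζ x).comp (ContinuousLinearMap.snd ℝ ℝ (Fin N → ℝ))) (t, x) :=
      HasFDerivAt.comp (g := ζ) (t, x) ((hζ.differentiable (by norm_num) x).hasFDerivAt) hasFDerivAt_snd
    have e3 : HasFDerivAt (fun q : ℝ × (Fin N → ℝ) => q.1)
        (ContinuousLinearMap.fst ℝ ℝ (Fin N → ℝ)) (t, x) := hasFDerivAt_fst
    have e4 : HasFDerivAt (fun q : ℝ × (Fin N → ℝ) => q.1 ^ 2 / 2)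
        (t • ContinuousLinearMap.fst ℝ ℝ (Fin N → ℝ)) (t, x) := by
      have := (hasDerivAt_pow 2 t).div_const 2 |>.comp_hasFDerivAt (t, x) e3
      have e5 : (((2 : ℕ) : ℝ) * t ^ (2 - 1) / 2) = t := by norm_num
      rw [e5] at this
      exact this
    have := e3.prodMk ((hasFDerivAt_snd.add (e3.smul e1)).add (e4.smul e2))
    rw [show fderiv ℝ G (t, x) = _ from this.fderiv]
    simp
  have hinj : Function.Injective (fderiv ℝ G (t, x)) := by
    rw [injective_iff_map_eq_zero]
    rintro ⟨s, ξ⟩ h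
    rw [hformula, Prod.mk_eq_zero] at h
    obtain ⟨rfl, h⟩ := h
    simp only [zero_smul, add_zero, mul_zero] at h
    have hξ : ξ = -(t • fderiv ℝ η x ξ + (t ^ 2 / 2) • fderiv ℝ ζ x ξ) := by
      rw [eq_neg_iff_add_eq_zero, ← h, add_assoc]
    have hn : ‖ξ‖ ≤ |t| * (C1 * ‖ξ‖) + t ^ 2 / 2 * (C2 * ‖ξ‖) := by
      calc ‖ξ‖ = ‖t • fderiv ℝ η x ξ + (t ^ 2 / 2) • fderiv ℝ ζ x ξ‖ := by
            conv_lhs => rw [hξ, norm_neg]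
        _ ≤ ‖t • fderiv ℝ η x ξ‖ + ‖(t ^ 2 / 2) • fderiv ℝ ζ x ξ‖ := norm_add_le _ _
        _ ≤ _ := by
          rw [norm_smul, norm_smul, Real.norm_eq_abs, Real.norm_of_nonneg (by positivity)]
          gcongr
          · exact (fderiv ℝ η x).le_of_opNorm_le (hC1 x) ξ
          · exact (fderiv ℝ ζ x).le_of_opNorm_le (hC2 x) ξ
    have ht2 : t ^ 2 / 2 ≤ |t| := by
      rw [← sq_abs]; nlinarith [abs_nonneg t]
    have hn2 : ‖ξ‖ ≤ |t| * (C1 + C2) * ‖ξ‖ := by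
      have : t ^ 2 / 2 * (C2 * ‖ξ‖) ≤ |t| * (C2 * ‖ξ‖) := by gcongr
      linarith
    have hz : ‖ξ‖ = 0 := by nlinarith [norm_nonneg ξ]
    rw [norm_eq_zero] at hz
    simp [hz]
  let e : (ℝ × (Fin N → ℝ)) ≃L[ℝ] (ℝ × (Fin N → ℝ)) :=
    (LinearEquiv.ofInjectiveEndo (fderiv ℝ G (t, x) : (ℝ × (Fin N → ℝ)) →ₗ[ℝ] (ℝ × (Fin N → ℝ)))
      hinj).toContinuousLinearEquiv
  have he : HasFDerivAt G (e : (ℝ × (Fin N → ℝ)) →L[ℝ] (ℝ × (Fin N → ℝ))) (t, x) := by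
    convert hGd using 1
    all_goals ext <;> rfl
  have hGa : ContDiffAt ℝ 3 G (t, x) := hG.contDiffAt
  have hloc := hGa.to_localInverse he (by norm_num)
  have hright := (hGa.hasStrictFDerivAt' he (by norm_num)).eventually_right_inverse
  rw [hGx] at hloc hright
  refine (contDiff_snd.contDiffAt.comp (t, y) hloc).congr_of_eventuallyEq ?_
  have hev : ∀ᶠ q : ℝ × (Fin N → ℝ) in 𝓝 (t, y), |q.1| < τ :=
    (isOpen_lt (f := fun q : ℝ × (Fin N → ℝ) => |q.1|) (g := fun _ => τ) (by fun_prop) (by fun_prop)).mem_nhds hp1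
  filter_upwards [hright, hev] with q hq hqt
  have hb := hbij q.1 hqt
  change _ = (hGa.localInverse he (by norm_num) q).2
  change G (hGa.localInverse he (by norm_num) q) = q at hq
  generalize hGa.localInverse he (by norm_num) q = r at hq
  apply hb.1
  rw [Function.rightInverse_invFun hb.2]
  subst hq
  simp only [G]
  rw [hΦ]

noncomputable def WW {N : ℕ} (f : ℝ × (Fin N → ℝ) → ℝ) (p : ℝ × (Fin N → ℝ)) : ℝ × (Fin N → ℝ) :=
  (f p, fun i => fderiv ℝ f p (0, Pi.single i 1))

theorem fderiv_dir {E : Type*} [NormedAddCommGroup E] [NormedSpace ℝ E] {n : WithTop ℕ∞}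
    {f : E → ℝ} {p : E} (hf : ContDiffAt ℝ n f p) (hn : 2 ≤ n) (a b : E) :
    fderiv ℝ (fun q => fderiv ℝ f q a) p b = fderiv ℝ (fderiv ℝ f) p b a := by
  have h1 : DifferentiableAt ℝ (fderiv ℝ f) p :=
    (hf.fderiv_right (m := 1) (by simpa [one_add_one_eq_two] using hn)).differentiableAt (by norm_num)
  have := h1.hasFDerivAt.clm_apply (hasFDerivAt_const a p)
  rw [this.fderiv]
  simp

theorem contDiffAt_dir {E : Type*} [NormedAddCommGroup E] [NormedSpace ℝ E] {n m : WithTop ℕ∞}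
    {f : E → ℝ} {p : E} (hf : ContDiffAt ℝ n f p) (hn : m + 1 ≤ n) (a : E) :
    ContDiffAt ℝ m (fun q => fderiv ℝ f q a) p :=
  (hf.fderiv_right hn).clm_apply contDiffAt_const

theorem WW_cont {N : ℕ} {f : ℝ × (Fin N → ℝ) → ℝ} {p : ℝ × (Fin N → ℝ)}
    (hf : ContDiffAt ℝ 1 f p) : ContinuousAt (WW f) p := by
  refine hf.continuousAt.prodMk (continuousAt_pi.2 fun i => ?_)
  exact (contDiffAt_dir (m := 0) hf (by norm_num) _).continuousAt

theorem hasDerivAt_slice {N : ℕ} {G : Type*} [NormedAddCommGroup G] [NormedSpace ℝ G]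
    {f : ℝ × (Fin N → ℝ) → G} {t : ℝ} {y : Fin N → ℝ}
    (hf : DifferentiableAt ℝ f (t, y)) :
    HasDerivAt (fun s => f (s, y)) (fderiv ℝ f (t, y) (1, 0)) t :=
  HasFDerivAt.comp_hasDerivAt (l := f) (f := fun s => (s, y)) t hf.hasFDerivAt
    ((hasDerivAt_id t).prodMk (hasDerivAt_const t y))

theorem fderiv_slice {N : ℕ} {f : ℝ × (Fin N → ℝ) → ℝ} {t : ℝ} {y : Fin N → ℝ}
    (hf : DifferentiableAt ℝ f (t, y)) (ξ : Fin N → ℝ) :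
    fderiv ℝ (fun z => f (t, z)) y ξ = fderiv ℝ f (t, y) (0, ξ) := by
  have h : HasFDerivAt (fun z : Fin N → ℝ => (t, z))
      ((0 : (Fin N → ℝ) →L[ℝ] ℝ).prod (ContinuousLinearMap.id ℝ (Fin N → ℝ))) y :=
    (hasFDerivAt_const t y).prodMk (hasFDerivAt_id y)
  have h2 : HasFDerivAt (fun z => f (t, z)) _ y :=
    HasFDerivAt.comp (g := f) y hf.hasFDerivAt h
  rw [h2.fderiv]
  simp

theorem WW_deriv {N : ℕ} {f : ℝ × (Fin N → ℝ) → ℝ} {t : ℝ} {y : Fin N → ℝ}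
    (hf : ContDiffAt ℝ 2 f (t, y)) :
    HasDerivAt (fun s => WW f (s, y)) (WW (fun q => fderiv ℝ f q (1, 0)) (t, y)) t := by
  refine HasDerivAt.prodMk (hasDerivAt_slice (hf.differentiableAt (by norm_num))) ?_
  rw [hasDerivAt_pi]
  intro i
  have h := hasDerivAt_slice (f := fun q => fderiv ℝ f q (0, Pi.single i 1)) (t := t) (y := y)
    ((contDiffAt_dir (m := 1) hf (by norm_num) _).differentiableAt (by norm_num))
  rw [fderiv_dir hf le_rfl] at h
  rw [fderiv_dir hf le_rfl, (hf.isSymmSndFDerivAt (by simp)).eq]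
  exact h

theorem sum_pdv {N : ℕ} (f : (Fin N → ℝ) → ℝ) (x c : Fin N → ℝ) :
    ∑ i, pdv f i x * c i = fderiv ℝ f x c := by
  conv_rhs => rw [pi_eq_sum_univ' c, map_sum]
  refine Finset.sum_congr rfl fun i _ => ?_
  rw [map_smul, smul_eq_mul, mul_comm]
  unfold pdv
  congr 2

theorem nGradDot_eq {N : ℕ} (u : (Fin N → ℝ) → ℝ) (η : (Fin N → ℝ) → (Fin N → ℝ)) :
    nGradDot u η = fun x => - fderiv ℝ u x (η x) := by
  ext x
  rw [nGradDot, sum_pdv]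

theorem advf_eq {N : ℕ} {η : (Fin N → ℝ) → (Fin N → ℝ)} (hη : ContDiff ℝ 3 η) (x : Fin N → ℝ) :
    advf η x = fderiv ℝ η x (η x) := by
  ext i
  rw [advf]
  simp_rw [mul_comm (η x _)]
  rw [sum_pdv]
  have h := (hη.differentiable (by norm_num) x).hasFDerivAt
  rw [hasFDerivAt_pi'] at h
  rw [(h i).fderiv]
  rfl

theorem X0_eq {N : ℕ} {u : (Fin N → ℝ) → ℝ} (hu : ContDiff ℝ 3 u)
    {η : (Fin N → ℝ) → (Fin N → ℝ)} (hη : ContDiff ℝ 3 η) (ζ : (Fin N → ℝ) → (Fin N → ℝ)) :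
    X0 u η ζ = fun x => fderiv ℝ (fderiv ℝ u) x (η x) (η x)
      + (2 * fderiv ℝ u x (fderiv ℝ η x (η x)) - fderiv ℝ u x (ζ x)) := by
  ext x
  rw [X0]
  congr 1
  · have h1 : ∀ i, ∑ j, pdv (pdv u i) j x * η x i * η x j
        = fderiv ℝ (fderiv ℝ u) x (η x) (Pi.single i 1) * η x i := by
      intro i
      rw [← fderiv_dir (n := 3) hu.contDiffAt (by norm_num), ← sum_pdv, Finset.sum_mul]
      refine Finset.sum_congr rfl fun j _ => ?_
      have : pdv u i = fun q => fderiv ℝ u q (Pi.single i 1) := rfl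
      rw [this]; ring
    simp_rw [h1]
    rw [← fderiv_dir (n := 3) hu.contDiffAt (by norm_num)]
    have h2 : ∀ i, fderiv ℝ (fderiv ℝ u) x (η x) (Pi.single i 1) =
      fderiv ℝ (fderiv ℝ u) x (Pi.single i 1) (η x) := fun i =>
      (hu.contDiffAt.isSymmSndFDerivAt (by simp; norm_num)).eq _ _
    rw [← sum_pdv]
    refine Finset.sum_congr rfl fun i _ => ?_
    rw [h2, pdv, fderiv_dir (n := 3) hu.contDiffAt (by norm_num)]
  · rw [sum_pdv u x (fun i => 2 * advf η x i - ζ x i)]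
    have : (fun i => 2 * advf η x i - ζ x i) = (2 : ℝ) • fderiv ℝ η x (η x) - ζ x := by
      rw [advf_eq hη]; rfl
    rw [this, map_sub, map_smul, smul_eq_mul]

theorem gat {N : ℕ} {Ω : Set (Fin N → ℝ)} (hΩo : IsOpen Ω) (hΩb : Bornology.IsBounded Ω)
    {F : ℝ × (Fin N → ℝ) → ℝ} (hF : ContDiff ℝ 3 F)
    {u φ : (Fin N → ℝ) → ℝ} (hu : ContDiff ℝ 3 u) (hφ : ContDiff ℝ 1 φ) :
    (IntegrableOn (fun y => fderiv ℝ F (u y, grad u y) (φ y, grad φ y)) Ω ∧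
      deriv (gateauxA Ω F u φ) 0 = ∫ y in Ω, fderiv ℝ F (u y, grad u y) (φ y, grad φ y)) ∧
    (IntegrableOn (fun y => fderiv ℝ (fderiv ℝ F) (u y, grad u y) (φ y, grad φ y) (φ y, grad φ y)) Ω ∧
      deriv (deriv (gateauxA Ω F u φ)) 0 =
        ∫ y in Ω, fderiv ℝ (fderiv ℝ F) (u y, grad u y) (φ y, grad φ y) (φ y, grad φ y)) := by
  have hgr : ∀ {f : (Fin N → ℝ) → ℝ}, ContDiff ℝ 1 f → Continuous (grad f) := by
    intro f hf
    refine continuous_pi fun i => ?_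
    exact (hf.continuous_fderiv (by norm_num)).clm_apply continuous_const
  have hgu := hgr (hu.of_le (by norm_num))
  have hgφ := hgr hφ
  have hcu := hu.continuous
  have hcφ := hφ.continuous
  let w : ℝ × (Fin N → ℝ) → ℝ × (Fin N → ℝ) := fun p =>
    (u p.2 + p.1 * φ p.2, fun i => pdv u i p.2 + p.1 * pdv φ i p.2)
  let w1 : ℝ × (Fin N → ℝ) → ℝ × (Fin N → ℝ) := fun p => (φ p.2, grad φ p.2)
  have hw : Continuous w := by
    have : w = fun p => ((u p.2, grad u p.2) : ℝ × (Fin N → ℝ)) + p.1 • (φ p.2, grad φ p.2) := rfl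
    rw [this]
    fun_prop
  have hw1 : Continuous w1 := by fun_prop
  have hd : ∀ (t : ℝ) (y : Fin N → ℝ), |t| < 1 → HasDerivAt (fun s => w (s, y)) (w1 (t, y)) t := by
    intro t y _
    have h := ((hasDerivAt_id t).smul_const (φ y, grad φ y)).const_add (u y, grad u y)
    rw [one_smul] at h
    exact h
  have w0 : ∀ y, w (0, y) = (u y, grad u y) := by
    intro y
    simp only [w, zero_mul, add_zero]
    rfl
  have e : gateauxA Ω F u φ = fun s => ∫ y in Ω, F (w (s, y)) := rfl
  have A := L3a hΩo hΩb hF (δ := 1) (fun p _ => hw.continuousAt) (fun p _ => hw1.continuousAt) hd 0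
    (by norm_num)
  have B := L3b hΩo hΩb hF (δ := 1) one_pos (w2 := fun _ => 0)
    (fun p _ => hw.continuousAt) (fun p _ => hw1.continuousAt) (fun p _ => continuousAt_const) hd
    (fun t y _ => hasDerivAt_const t (w1 (t, y)))
  simp only [w0, map_zero, add_zero] at A B
  exact ⟨⟨A.1, A.2.deriv⟩, B⟩

theorem inner_variations_eq_gateaux_variations
    (N : ℕ) (Ω : Set (Fin N → ℝ)) (hΩo : IsOpen Ω) (hΩb : Bornology.IsBounded Ω)
    (F : ℝ × (Fin N → ℝ) → ℝ) (hF : ContDiff ℝ 3 F)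
    (u : (Fin N → ℝ) → ℝ) (hu : ContDiff ℝ 3 u) (hub : BddUpTo 3 u)
    (η ζ : (Fin N → ℝ) → (Fin N → ℝ))
    (hη : ContDiff ℝ 3 η) (hηb : BddUpTo 3 η)
    (hζ : ContDiff ℝ 3 ζ) (hζb : BddUpTo 3 ζ)
    (Φ : ℝ → (Fin N → ℝ) → (Fin N → ℝ))
    (hΦ : ∀ t x, Φ t x = x + t • η x + (t ^ 2 / 2) • ζ x)
    (τ : ℝ) (hτ : 0 < τ)
    (hbij : ∀ t : ℝ, |t| < τ → Function.Bijective (Φ t)) :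
    deriv (innerA Ω F u Φ) 0 = deriv (gateauxA Ω F u (nGradDot u η)) 0 ∧
    deriv (deriv (innerA Ω F u Φ)) 0
      = deriv (deriv (gateauxA Ω F u (nGradDot u η))) 0
        + deriv (gateauxA Ω F u (X0 u η ζ)) 0 := by
  obtain ⟨δ, hδ, hδτ, hψ⟩ := smooth_inv η ζ hη hηb hζ hζb Φ hΦ τ hτ hbij
  let v : ℝ × (Fin N → ℝ) → ℝ := fun q => u (Function.invFun (Φ q.1) q.2)
  let Vt : ℝ × (Fin N → ℝ) → ℝ := fun q => fderiv ℝ v q (1, 0)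
  let Vtt : ℝ × (Fin N → ℝ) → ℝ := fun q => fderiv ℝ Vt q (1, 0)
  have hv : ∀ p : ℝ × (Fin N → ℝ), |p.1| < δ → ContDiffAt ℝ 3 v p := fun p hp =>
    ContDiffAt.comp (g := u) p hu.contDiffAt (hψ p hp)
  have hVt : ∀ p : ℝ × (Fin N → ℝ), |p.1| < δ → ContDiffAt ℝ 2 Vt p := fun p hp =>
    contDiffAt_dir (hv p hp) (by norm_num) _
  have hVtt : ∀ p : ℝ × (Fin N → ℝ), |p.1| < δ → ContDiffAt ℝ 1 Vtt p := fun p hp =>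
    contDiffAt_dir (hVt p hp) (by norm_num) _
  have h0 : ∀ y : Fin N → ℝ, |((0 : ℝ), y).1| < δ := fun y => by simpa using hδ
  have h0' : |(0 : ℝ)| < δ := by simpa using hδ
  have hinv : ∀ t x, |t| < δ → v (t, Φ t x) = u x := by
    intro t x ht
    simp only [v]
    rw [Function.leftInverse_invFun (hbij t (ht.trans_le hδτ)).1]
  have hΦ0 : ∀ x, Φ 0 x = x := by intro x; simp [hΦ]
  have hv0 : (fun y => v (0, y)) = u := by
    ext y
    have := hinv 0 y h0'
    rwa [hΦ0] at this
  have hnear : ∀ᶠ t : ℝ in 𝓝 0, |t| < δ := by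
    filter_upwards [Metric.ball_mem_nhds (0 : ℝ) hδ] with t ht
    simpa using ht
  have hcurve : ∀ (x : Fin N → ℝ) (t : ℝ),
      HasDerivAt (fun s => (s, Φ s x)) ((1 : ℝ), η x + t • ζ x) t := by
    intro x t
    refine (hasDerivAt_id t).prodMk ?_
    have h1 := (hasDerivAt_id t).smul_const (η x)
    have h2 := ((hasDerivAt_pow 2 t).div_const 2).smul_const (ζ x)
    have h3 := (h1.const_add x).add h2
    have e5 : (((2 : ℕ) : ℝ) * t ^ (2 - 1) / 2) = t := by norm_num
    rw [e5, one_smul] at h3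
    have e6 : (fun s => Φ s x) = fun s => x + s • η x + (s ^ 2 / 2) • ζ x := by
      ext1 s; exact hΦ s x
    rw [e6]
    exact h3
  have htr : ∀ (x : Fin N → ℝ) (t : ℝ), |t| < δ →
      fderiv ℝ v (t, Φ t x) (1, η x + t • ζ x) = 0 := by
    intro x t ht
    have h1 := HasFDerivAt.comp_hasDerivAt (l := v) (f := fun s => (s, Φ s x)) t
      ((hv (t, Φ t x) ht).differentiableAt (by norm_num)).hasFDerivAt (hcurve x t)
    have h2 : HasDerivAt (v ∘ fun s => (s, Φ s x)) 0 t := by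
      refine (hasDerivAt_const t (u x)).congr_of_eventuallyEq ?_
      have : ∀ᶠ s : ℝ in 𝓝 t, |s| < δ :=
        (isOpen_lt continuous_abs continuous_const).mem_nhds ht
      filter_upwards [this] with s hs
      exact hinv s x hs
    exact h1.unique h2
  have hsl : ∀ x ξ, fderiv ℝ v (0, x) (0, ξ) = fderiv ℝ u x ξ := by
    intro x ξ
    rw [← fderiv_slice ((hv (0, x) h0').differentiableAt (by norm_num)), hv0]
  have hA : (fun y => Vt (0, y)) = nGradDot u η := by
    rw [nGradDot_eq]
    ext x
    have h1 := htr x 0 h0'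
    rw [hΦ0, zero_smul, add_zero] at h1
    have : ((1 : ℝ), η x) = (1, 0) + (0, η x) := by simp
    rw [this, map_add, hsl] at h1
    simp only [Vt]
    linarith
  have hdφ : ∀ x ξ, fderiv ℝ (nGradDot u η) x ξ =
      -(fderiv ℝ (fderiv ℝ u) x ξ (η x) + fderiv ℝ u x (fderiv ℝ η x ξ)) := by
    intro x ξ
    have h1 : DifferentiableAt ℝ (fderiv ℝ u) x :=
      (hu.fderiv_right (m := 2) (by norm_num)).differentiable (by norm_num) x
    have h2 := (h1.hasFDerivAt.clm_apply (hη.differentiable (by norm_num) x).hasFDerivAt).neg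
    rw [nGradDot_eq, show fderiv ℝ (fun x => -fderiv ℝ u x (η x)) x = _ from h2.fderiv]
    simp [add_comm]
  have hB : (fun y => Vtt (0, y)) = X0 u η ζ := by
    rw [X0_eq hu hη]
    ext x
    have hvx := hv (0, x) h0'
    have hd1 : DifferentiableAt ℝ (fderiv ℝ v) (0, Φ 0 x) := by
      rw [hΦ0]
      exact (hvx.fderiv_right (m := 2) (by norm_num)).differentiableAt (by norm_num)
    have k1 := HasFDerivAt.comp_hasDerivAt (l := fderiv ℝ v) (f := fun s => (s, Φ s x)) 0
      hd1.hasFDerivAt (hcurve x 0)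
    have k2 : HasDerivAt (fun s : ℝ => ((1 : ℝ), η x + s • ζ x)) (0, ζ x) 0 := by
      have := ((hasDerivAt_id (0 : ℝ)).smul_const (ζ x)).const_add (η x)
      rw [one_smul] at this
      exact (hasDerivAt_const _ _).prodMk this
    have k3 := k1.clm_apply k2
    have k4 : HasDerivAt (fun s => fderiv ℝ v (s, Φ s x) (1, η x + s • ζ x)) 0 0 := by
      refine (hasDerivAt_const (0 : ℝ) (0 : ℝ)).congr_of_eventuallyEq ?_
      filter_upwards [hnear] with s hs
      exact htr x s hs
    have k5 := k3.unique k4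
    simp only [Function.comp, hΦ0, zero_smul, add_zero] at k5
    have hsplit : ((1 : ℝ), η x) = (1, 0) + (0, η x) := by simp
    rw [hsl, hsplit] at k5
    simp only [map_add, ContinuousLinearMap.add_apply] at k5
    have c1 : fderiv ℝ (fderiv ℝ v) (0, x) (1, 0) (1, 0) = Vtt (0, x) :=
      (fderiv_dir hvx (by norm_num) _ _).symm
    have c2 : fderiv ℝ (fderiv ℝ v) (0, x) (0, η x) (1, 0) = fderiv ℝ (nGradDot u η) x (η x) := by
      rw [← fderiv_dir hvx (by norm_num), ← hA]
      exact (fderiv_slice (f := Vt) ((hVt (0, x) h0').differentiableAt (by norm_num)) _).symm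
    have c3 : fderiv ℝ (fderiv ℝ v) (0, x) (1, 0) (0, η x)
        = fderiv ℝ (fderiv ℝ v) (0, x) (0, η x) (1, 0) :=
      (hvx.isSymmSndFDerivAt (by simp; norm_num)).eq _ _
    have c4 : fderiv ℝ (fderiv ℝ v) (0, x) (0, η x) (0, η x)
        = fderiv ℝ (fderiv ℝ u) x (η x) (η x) := by
      rw [← fderiv_dir hvx (by norm_num), ← fderiv_dir (n := 3) hu.contDiffAt (by norm_num)]
      have := fderiv_slice (f := fun q => fderiv ℝ v q (0, η x)) (t := 0) (y := x)
        ((contDiffAt_dir (m := 2) hvx (by norm_num) _).differentiableAt (by norm_num)) (η x)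
      rw [← this]
      simp_rw [hsl]
    rw [c3, c2, c1, c4, hdφ] at k5
    linarith
  have hW : ∀ {f : ℝ × (Fin N → ℝ) → ℝ} {t : ℝ} {y : Fin N → ℝ}, DifferentiableAt ℝ f (t, y) →
      WW f (t, y) = (f (t, y), grad (fun z => f (t, z)) y) := by
    intro f t y hf
    rw [WW]
    congr 1
    ext i
    rw [grad, pdv, fderiv_slice hf]
  have w0 : ∀ y, WW v (0, y) = (u y, grad u y) := by
    intro y
    rw [hW ((hv (0, y) h0').differentiableAt (by norm_num)), hv0, ← congrFun hv0 y]
  have w1 : ∀ y, WW Vt (0, y) = (nGradDot u η y, grad (nGradDot u η) y) := by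
    intro y
    rw [hW ((hVt (0, y) h0').differentiableAt (by norm_num)), hA, ← congrFun hA y]
  have w2 : ∀ y, WW Vtt (0, y) = (X0 u η ζ y, grad (X0 u η ζ) y) := by
    intro y
    rw [hW ((hVtt (0, y) h0').differentiableAt (by norm_num)), hB, ← congrFun hB y]
  have hcW : ∀ p : ℝ × (Fin N → ℝ), |p.1| < δ → ContinuousAt (WW v) p := fun p hp =>
    WW_cont ((hv p hp).of_le (by norm_num))
  have hcW1 : ∀ p : ℝ × (Fin N → ℝ), |p.1| < δ → ContinuousAt (WW Vt) p := fun p hp =>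
    WW_cont ((hVt p hp).of_le (by norm_num))
  have hcW2 : ∀ p : ℝ × (Fin N → ℝ), |p.1| < δ → ContinuousAt (WW Vtt) p := fun p hp =>
    WW_cont (hVtt p hp)
  have hdW : ∀ (t : ℝ) (y : Fin N → ℝ), |t| < δ →
      HasDerivAt (fun s => WW v (s, y)) (WW Vt (t, y)) t := fun t y ht =>
    WW_deriv ((hv (t, y) ht).of_le (by norm_num))
  have hdW1 : ∀ (t : ℝ) (y : Fin N → ℝ), |t| < δ →
      HasDerivAt (fun s => WW Vt (s, y)) (WW Vtt (t, y)) t := fun t y ht =>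
    WW_deriv (hVt (t, y) ht)
  have hA1 := L3a hΩo hΩb hF hcW hcW1 hdW 0 h0'
  have hA2 := L3b hΩo hΩb hF hδ hcW hcW1 hcW2 hdW hdW1
  have hev : innerA Ω F u Φ =ᶠ[𝓝 0] fun s => ∫ y in Ω, F (WW v (s, y)) := by
    filter_upwards [hnear] with t ht
    rw [innerA]
    congr 1
    ext y
    rw [hW ((hv (t, y) ht).differentiableAt (by norm_num))]
  have hφ : ContDiff ℝ 1 (nGradDot u η) := by
    rw [← hA, contDiff_iff_contDiffAt]
    intro y
    exact ContDiffAt.comp (g := Vt) y ((hVt (0, y) h0').of_le (by norm_num)) (by fun_prop)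
  have hX : ContDiff ℝ 1 (X0 u η ζ) := by
    rw [← hB, contDiff_iff_contDiffAt]
    intro y
    exact ContDiffAt.comp (g := Vtt) y (hVtt (0, y) h0') (by fun_prop)
  have g1 := gat hΩo hΩb hF hu hφ
  have g2 := gat hΩo hΩb hF hu hX
  simp only [w0, w1, w2] at hA1 hA2
  constructor
  · rw [hev.deriv_eq, hA1.2.deriv, g1.1.2]
  · rw [hev.deriv.deriv_eq, hA2.2, g1.2.2, g2.1.2]
    exact integral_add g1.2.1 g2.1.1

end PaperAC
end
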